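/- Let 0 ≤ p ≤ 1 and let B ≥ 2 be a fixed integer. Consider random instances in F(n, m(n), B, p·P_{(1,1)} + (1−p)·P_{(2)}), where n ranges over multiples of B (so the community size is h = n/B), and suppose m(n)/n → r as n → ∞. Then: if r < 1, a random instance is satisfiable with high probability, and if r > 1, a random instance is unsatisfiable with high probability; i.e., the satisfiability threshold of this model is 1. -/

import Mathlib

open Filter Asymptotics

namespace RandIndSAT

attribute [local instance] Classical.propDecidable

/-- A clause over `n` Boolean variables: a finite set of literals, where a literal is a
variable together with a polarity (`true` = positive occurrence, `false` = negation). -/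
abbrev Clause (n : ℕ) := Finset (Fin n × Bool)

/-- The set of variables occurring in a clause. -/
def vars {n : ℕ} (C : Clause n) : Finset (Fin n) := C.image Prod.fst

/-- A clause is proper if its literals carry pairwise distinct variables. -/
def Proper {n : ℕ} (C : Clause n) : Prop := C.card = (vars C).card

/-- A truth assignment satisfies a clause if some literal of it evaluates to true. -/
def SatClause {n : ℕ} (σ : Fin n → Bool) (C : Clause n) : Prop :=
  ∃ l ∈ C, σ l.1 = l.2

/-- An instance (an `m`-tuple of clauses) is satisfiable. -/
def SatInstance {n m : ℕ} (I : Fin m → Clause n) : Prop :=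
  ∃ σ : Fin n → Bool, ∀ i, SatClause σ (I i)

/-- The community of a variable, where communities have size `h`:
community `i` consists of the variables `v` with `i*h ≤ v < (i+1)*h`. -/
def comm (h : ℕ) {n : ℕ} (v : Fin n) : ℕ := (v : ℕ) / h

/-- The type of a clause: the multiset of the (nonzero) numbers of its variables lying in
the various communities. -/
def clauseType (h : ℕ) {n : ℕ} (C : Clause n) : Multiset ℕ :=
  Multiset.filter (fun c => c ≠ 0)
    ((Finset.range n).val.map fun i => ((vars C).filter fun v => comm h v = i).card)

/-- `Ω_B(n, K)`: the set of all proper clauses of type `K`, for communities of size `h`. -/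
noncomputable def clausesOfType (n h : ℕ) (K : Multiset ℕ) : Finset (Clause n) :=
  Finset.univ.filter fun C => Proper C ∧ clauseType h C = K

/-- A clause type `K = (k_1, …, k_ℓ)` is valid for `n` variables split into communities of
size `h`: its entries are positive, `ℓ ≤ B = n/h`, and each `k_j ≤ h`. -/
def ValidType (n h : ℕ) (K : Multiset ℕ) : Prop :=
  0 ∉ K ∧ K.card ≤ n / h ∧ ∀ a ∈ K, a ≤ h

/-- The probability of drawing a given clause under the mixture `P = ∑_t p_t • P_{K_t}`
of the uniform measures `P_{K_t}` on the sets `Ω_B(n, K_t)`. -/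
noncomputable def clauseProb (n h : ℕ) {T : ℕ} (p : Fin T → ℝ) (K : Fin T → Multiset ℕ)
    (C : Clause n) : ℝ :=
  ∑ t, p t *
    (if C ∈ clausesOfType n h (K t) then ((clausesOfType n h (K t)).card : ℝ)⁻¹ else 0)

/-- The probability that a random instance of `F(n, m, B, P)` — communities of size
`h = n/B`, and `m` clauses drawn independently from `P = ∑_t p_t • P_{K_t}` — is
satisfiable. -/
noncomputable def satProb (n m h : ℕ) {T : ℕ} (p : Fin T → ℝ) (K : Fin T → Multiset ℕ) : ℝ :=
  ∑ I : Fin m → Clause n,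
    (∏ i, clauseProb n h p K (I i)) * (if SatInstance I then 1 else 0)

/-- The satisfiability probability for the model with the single-community clause type
`P_(k)`, i.e. `F(n, m, B, P_(k))` with communities of size `h = n/B`. -/
noncomputable def satProbSingle (n m h k : ℕ) : ℝ :=
  satProb n m h (fun _ : Fin 1 => (1 : ℝ)) fun _ => ({k} : Multiset ℕ)

/-- The satisfiability probability of a random `k`-SAT instance with `n` variables and `m`
clauses (the case of a single community of size `n`). -/
noncomputable def ksatProb (n m k : ℕ) : ℝ := satProbSingle n m n k

/-- `r_k`: the supremum of the densities `α` for which a random `k`-SAT instance with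
`⌈αn⌉` clauses is satisfiable w.h.p. -/
noncomputable def rSat (k : ℕ) : ℝ :=
  sSup {α : ℝ | 0 ≤ α ∧
    Tendsto (fun n : ℕ => ksatProb n ⌈α * (n : ℝ)⌉₊ k) atTop (nhds 1)}

/-- `r_k^*`: the infimum of the densities `α` for which a random `k`-SAT instance with
`⌈αn⌉` clauses is unsatisfiable w.h.p. -/
noncomputable def rUnsat (k : ℕ) : ℝ :=
  sInf {α : ℝ | 0 ≤ α ∧
    Tendsto (fun n : ℕ => ksatProb n ⌈α * (n : ℝ)⌉₊ k) atTop (nhds 0)}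

/-!
Below density `1`: an unsatisfiable formula whose clauses have two literals contains a bicycle, a
path of implications through distinct variables which is entered from and left towards its own
variables. If every literal is equally likely and every clause has probability `O(1 / n ^ 2)`, then
the expected number of bicycles along paths of `s + 1` literals is `O((s + 1) ^ 2 * ρ ^ s / n)` for
`m / n ≤ ρ`, and the sum over `s` is `O(1 / n)` for `ρ < 1`.

Above density `1`: a depth-first search that examines the clauses one at a time finds a path of
implications of linear length in the first `(1 + ε) * n` clauses; an exponential potential shows
that it fails with exponentially small probability. Truth propagates along the path, so a clause
between two literals of its first half makes its end true, and a clause between the negations of two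
literals of its second half makes its start false. Among the remaining `Θ(n)` clauses both kinds
occur with high probability, because each kind has probability bounded below.
-/

lemma mem_range_removeNth {α : Type*} {m : ℕ} {I : Fin (m + 1) → α} {i : Fin (m + 1)} {a : α}
    (ha : a ∈ Set.range I) (hne : a ≠ I i) : a ∈ Set.range (i.removeNth I) := by
  obtain ⟨j, rfl⟩ := ha
  obtain ⟨k, rfl⟩ := Fin.exists_succAbove_eq (x := j) (y := i) fun hji => hne (by rw [hji])
  exact ⟨k, rfl⟩

section ProductProbability

variable {α : Type*} [Fintype α] {q : α → ℝ} {m : ℕ}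

/-- The probability of the event `E` for `m` independent draws with weights `q`. The weights are
arbitrary reals; it is a probability when `q ∈ stdSimplex ℝ α`. -/
noncomputable def prob (q : α → ℝ) (m : ℕ) (E : (Fin m → α) → Prop) : ℝ :=
  ∑ I, (∏ i, q (I i)) * (if E I then 1 else 0)

lemma satProb_eq_prob (n m h : ℕ) {T : ℕ} (p : Fin T → ℝ) (K : Fin T → Multiset ℕ) :
    satProb n m h p K = prob (clauseProb n h p K) m SatInstance :=
  rfl

lemma sum_prod_mul_le_sum_prod_mul (hq : ∀ a, 0 ≤ q a) {f g : (Fin m → α) → ℝ}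
    (h : ∀ I, (∀ i, q (I i) ≠ 0) → f I ≤ g I) :
    ∑ I, (∏ i, q (I i)) * f I ≤ ∑ I, (∏ i, q (I i)) * g I := by
  refine Finset.sum_le_sum fun I _ => ?_
  by_cases hI : ∀ i, q (I i) ≠ 0
  · exact mul_le_mul_of_nonneg_left (h I hI) (Finset.prod_nonneg fun i _ => hq _)
  · obtain ⟨i, hi⟩ := not_forall_not.mp hI
    simp [Finset.prod_eq_zero (f := fun i => q (I i)) (Finset.mem_univ i) hi]

lemma sum_prod_eq_one (hq : ∑ a, q a = 1) (m : ℕ) : ∑ I : Fin m → α, ∏ i, q (I i) = 1 := by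
  rw [← Fintype.sum_pow, hq, one_pow]

lemma prob_nonneg (hq : ∀ a, 0 ≤ q a) (E : (Fin m → α) → Prop) : 0 ≤ prob q m E :=
  Finset.sum_nonneg fun _ _ =>
    mul_nonneg (Finset.prod_nonneg fun _ _ => hq _) (ite_nonneg zero_le_one le_rfl)

lemma prob_mono (hq : ∀ a, 0 ≤ q a) {E E' : (Fin m → α) → Prop}
    (h : ∀ I, (∀ i, q (I i) ≠ 0) → E I → E' I) : prob q m E ≤ prob q m E' := by
  refine sum_prod_mul_le_sum_prod_mul hq fun I hI => ?_
  by_cases hE : E I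
  · simp [hE, h I hI hE]
  · simpa [hE] using ite_nonneg zero_le_one le_rfl

lemma prob_add_prob_not (hq : ∑ a, q a = 1) (E : (Fin m → α) → Prop) :
    prob q m E + prob q m (fun I => ¬ E I) = 1 := by
  rw [← sum_prod_eq_one hq m, prob, prob, ← Finset.sum_add_distrib]
  refine Finset.sum_congr rfl fun I _ => ?_
  by_cases h : E I <;> simp [h]

lemma prob_le_one (hq : q ∈ stdSimplex ℝ α) (E : (Fin m → α) → Prop) : prob q m E ≤ 1 := by
  linarith [prob_add_prob_not hq.2 E, prob_nonneg hq.1 fun I => ¬ E I]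

lemma prob_or_le (hq : ∀ a, 0 ≤ q a) (E E' : (Fin m → α) → Prop) :
    prob q m (fun I => E I ∨ E' I) ≤ prob q m E + prob q m E' := by
  simp only [prob, ← Finset.sum_add_distrib, ← mul_add]
  refine sum_prod_mul_le_sum_prod_mul hq fun I _ => ?_
  by_cases h : E I <;> by_cases h' : E' I <;> simp [h, h']

lemma prob_exists_mem_le (hq : ∀ a, 0 ≤ q a) {ι : Type*} (s : Finset ι)
    (E : ι → (Fin m → α) → Prop) :
    prob q m (fun I => ∃ x ∈ s, E x I) ≤ ∑ x ∈ s, prob q m (E x) := by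
  simp only [prob]
  rw [Finset.sum_comm]
  simp only [← Finset.mul_sum]
  refine sum_prod_mul_le_sum_prod_mul hq fun I _ => ?_
  have hnonneg : ∀ x ∈ s, (0 : ℝ) ≤ if E x I then 1 else 0 := fun x _ =>
    ite_nonneg zero_le_one le_rfl
  split_ifs with h
  · obtain ⟨x, hx, hE⟩ := h
    simpa [hE] using Finset.single_le_sum hnonneg hx
  · exact Finset.sum_nonneg hnonneg

lemma prob_exists_le (hq : ∀ a, 0 ≤ q a) {ι : Type*} [Fintype ι] (E : ι → (Fin m → α) → Prop) :
    prob q m (fun I => ∃ x, E x I) ≤ ∑ x, prob q m (E x) := by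
  simpa using prob_exists_mem_le hq Finset.univ E

lemma prob_forall_notMem (hq : ∑ a, q a = 1) (m : ℕ) (Z : Finset α) :
    prob q m (fun I => ∀ i, I i ∉ Z) = (1 - ∑ a ∈ Z, q a) ^ m := by
  have hcompl : 1 - ∑ a ∈ Z, q a = ∑ a, q a * (if a ∉ Z then 1 else 0) :=
    calc 1 - ∑ a ∈ Z, q a = ∑ a ∈ Zᶜ, q a := by
          rw [← hq, ← Finset.sum_compl_add_sum Z, add_sub_cancel_right]
      _ = ∑ a, q a * (if a ∉ Z then 1 else 0) := by
          simp [Finset.sum_ite, Finset.compl_eq_univ_sdiff, Finset.sdiff_eq_filter]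
  rw [hcompl, Fintype.sum_pow, prob]
  refine Finset.sum_congr rfl fun I _ => ?_
  rw [Finset.prod_mul_distrib, Finset.prod_ite_zero]
  simp

lemma prob_forall_notMem_le_exp (hq : q ∈ stdSimplex ℝ α) (m : ℕ) (Z : Finset α) :
    prob q m (fun I => ∀ i, I i ∉ Z) ≤ Real.exp (-(m * ∑ a ∈ Z, q a)) := by
  have hZ : ∑ a ∈ Z, q a ≤ 1 :=
    (Finset.sum_le_univ_sum_of_nonneg hq.1).trans_eq hq.2
  rw [prob_forall_notMem hq.2, ← mul_neg, Real.exp_nat_mul]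
  exact pow_le_pow_left₀ (sub_nonneg.2 hZ) (Real.one_sub_le_exp_neg _) m

lemma prob_eq_and_removeNth (i : Fin (m + 1)) (c : α) (E : (Fin m → α) → Prop) :
    prob q (m + 1) (fun I => I i = c ∧ E (i.removeNth I)) = q c * prob q m E := by
  rw [prob, ← (Fin.insertNthEquiv (fun _ => α) i).sum_comp, Fintype.sum_prod_type,
    Finset.sum_eq_single c (fun b _ hb => by simp [hb]) (by simp), prob, Finset.mul_sum]
  refine Finset.sum_congr rfl fun I _ => ?_
  simp [Fin.insertNthEquiv, Fin.prod_univ_succAbove _ i]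

lemma prob_exists_eq_and_removeNth_le (hq : ∀ a, 0 ≤ q a) (c : α) (E : (Fin m → α) → Prop) :
    prob q (m + 1) (fun I => ∃ i, I i = c ∧ E (i.removeNth I)) ≤
      (m + 1 : ℕ) * (q c * prob q m E) :=
  (prob_exists_le hq _).trans_eq (by simp [prob_eq_and_removeNth])

lemma prob_succ_le_add (hq : ∀ a, 0 ≤ q a) (c : α) {E : (Fin (m + 1) → α) → Prop}
    {E' : (Fin m → α) → Prop} (h : ∀ I i, I i = c → E I → E' (i.removeNth I)) :
    prob q (m + 1) E ≤
      prob q (m + 1) (fun I => (∀ i, I i ≠ c) ∧ E I) + (m + 1 : ℕ) * (q c * prob q m E') := by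
  refine (prob_mono hq fun I _ hE => ?_).trans <| (prob_or_le hq _ _).trans <|
    add_le_add_right (prob_exists_eq_and_removeNth_le hq c E') _
  by_cases hc : ∀ i, I i ≠ c
  · exact .inl ⟨hc, hE⟩
  · obtain ⟨i, hi⟩ := not_forall_not.mp hc
    exact .inr ⟨i, hi, h I i hi hE⟩

lemma prob_subset_range_le (hq : q ∈ stdSimplex ℝ α) (s : Finset α) (m : ℕ) :
    prob q m (fun I => ↑s ⊆ Set.range I) ≤ (m : ℝ) ^ s.card * ∏ c ∈ s, q c := by
  induction s using Finset.induction_on generalizing m with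
  | empty => simpa using prob_le_one hq _
  | insert c s hc ih =>
    have hprod : 0 ≤ ∏ c ∈ s, q c := Finset.prod_nonneg fun a _ => hq.1 a
    cases m with
    | zero => simp [prob, Set.subset_empty_iff, (Set.insert_nonempty _ _).ne_empty]
    | succ k =>
      calc prob q (k + 1) (fun I => ↑(insert c s) ⊆ Set.range I)
          ≤ prob q (k + 1) (fun I => ∃ i, I i = c ∧ ↑s ⊆ Set.range (i.removeNth I)) := by
            refine prob_mono hq.1 fun I _ h => ?_
            rw [Finset.coe_insert, Set.insert_subset_iff] at h
            obtain ⟨⟨i, rfl⟩, hs⟩ := h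
            exact ⟨i, rfl, fun a ha => mem_range_removeNth (hs ha) (ne_of_mem_of_not_mem ha hc)⟩
        _ ≤ (k + 1 : ℕ) * (q c * ((k : ℝ) ^ s.card * ∏ c ∈ s, q c)) := by
            refine (prob_exists_eq_and_removeNth_le hq.1 c (fun I => ↑s ⊆ Set.range I)).trans ?_
            gcongr
            exacts [hq.1 c, ih k]
        _ ≤ (k + 1 : ℕ) * (q c * (((k + 1 : ℕ) : ℝ) ^ s.card * ∏ c ∈ s, q c)) := by
            gcongr
            exacts [hq.1 c, k.le_succ]
        _ = ((k + 1 : ℕ) : ℝ) ^ (insert c s).card * ∏ c ∈ insert c s, q c := by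
            rw [Finset.card_insert_of_notMem hc, Finset.prod_insert hc]
            ring

lemma prob_append (q : α → ℝ) {k l : ℕ} (E : (Fin (k + l) → α) → Prop) :
    prob q (k + l) E =
      ∑ I : Fin k → α, (∏ i, q (I i)) * prob q l (fun J => E (Fin.append I J)) := by
  rw [prob, ← (Fin.appendEquiv k l).sum_comp, Fintype.sum_prod_type]
  refine Finset.sum_congr rfl fun I _ => ?_
  rw [prob, Finset.mul_sum]
  refine Finset.sum_congr rfl fun J _ => ?_
  simp only [Fin.appendEquiv, Equiv.coe_fn_mk, Fin.prod_univ_add, Fin.append_left,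
    Fin.append_right, mul_assoc]
  congr

lemma prob_append_le (hq : q ∈ stdSimplex ℝ α) {k l : ℕ} (E : (Fin (k + l) → α) → Prop)
    (A : (Fin k → α) → Prop) {ε : ℝ} (hε : 0 ≤ ε)
    (h : ∀ I, (∀ i, q (I i) ≠ 0) → ¬ A I → prob q l (fun J => E (Fin.append I J)) ≤ ε) :
    prob q (k + l) E ≤ prob q k A + ε := by
  have hsplit : prob q k A + ε =
      ∑ I : Fin k → α, (∏ i, q (I i)) * ((if A I then 1 else 0) + ε) := by
    simp only [mul_add, Finset.sum_add_distrib, ← Finset.sum_mul, sum_prod_eq_one hq.2, one_mul,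
      prob]
  rw [prob_append, hsplit]
  refine sum_prod_mul_le_sum_prod_mul hq.1 fun I hI => ?_
  by_cases hA : A I
  · simpa [hA] using (prob_le_one hq _).trans (le_add_of_nonneg_right hε)
  · simpa [hA] using h I hI hA

end ProductProbability

section Literals

variable {α : Type*}

/-- The negation of a literal over the variables `α`. -/
def negLit (l : α × Bool) : α × Bool := (l.1, !l.2)

@[simp] lemma negLit_negLit (l : α × Bool) : negLit (negLit l) = l := by simp [negLit]

lemma negLit_ne (l : α × Bool) : negLit l ≠ l := fun h => by
  simpa [negLit] using congrArg Prod.snd h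

lemma eq_or_eq_negLit {a b : α × Bool} (h : a.1 = b.1) : a = b ∨ a = negLit b := by
  obtain ⟨x, s⟩ := a
  obtain ⟨y, t⟩ := b
  cases s <;> cases t <;> simp_all [negLit]

variable {R : α × Bool → α × Bool → Prop}

/-- A relation on literals that is closed under contraposition, as the implications expressed by
clauses with two literals are. -/
def SkewSymmetric (R : α × Bool → α × Bool → Prop) : Prop :=
  ∀ ⦃a b⦄, R a b → R (negLit b) (negLit a)

lemma SkewSymmetric.reflTransGen (hR : SkewSymmetric R) :
    SkewSymmetric (Relation.ReflTransGen R) := by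
  intro a b hab
  induction hab with
  | refl => exact .refl
  | tail _ hbc ih => exact .head (hR hbc) ih

/-- A consistent set of literals that is closed under the implications `R`: the true literals of a
partial assignment that respects `R`. -/
structure IsPartialModel (R : α × Bool → α × Bool → Prop) (L : Set (α × Bool)) : Prop where
  negLit_notMem : ∀ a ∈ L, negLit a ∉ L
  mem_of_rel : ∀ a ∈ L, ∀ b, R a b → b ∈ L

namespace IsPartialModel

lemma mem_of_reflTransGen {L : Set (α × Bool)} (hL : IsPartialModel R L) {a b : α × Bool}
    (ha : a ∈ L) (hab : Relation.ReflTransGen R a b) : b ∈ L := by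
  induction hab with
  | refl => exact ha
  | tail _ hbc ih => exact hL.mem_of_rel _ ih _ hbc

lemma sUnion {c : Set (Set (α × Bool))} (hc : ∀ L ∈ c, IsPartialModel R L)
    (hchain : IsChain (· ⊆ ·) c) : IsPartialModel R (⋃₀ c) where
  negLit_notMem := by
    rintro a ⟨L, hL, ha⟩ ⟨L', hL', ha'⟩
    rcases hchain.total hL hL' with h | h
    · exact (hc L' hL').negLit_notMem a (h ha) ha'
    · exact (hc L hL).negLit_notMem a ha (h ha')
  mem_of_rel := fun a ⟨L, hL, ha⟩ b hab => ⟨L, hL, (hc L hL).mem_of_rel a ha b hab⟩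

lemma union_reachable (hR : SkewSymmetric R) {L : Set (α × Bool)} (hL : IsPartialModel R L)
    {x : α × Bool} (hx : negLit x ∉ L) (hxx : ¬ Relation.ReflTransGen R x (negLit x)) :
    IsPartialModel R (L ∪ {y | Relation.ReflTransGen R x y}) where
  negLit_notMem := by
    have hcontra : ∀ {a}, Relation.ReflTransGen R x (negLit a) →
        Relation.ReflTransGen R a (negLit x) := fun h => by simpa using hR.reflTransGen h
    rintro a (ha | ha) (ha' | ha')
    · exact hL.negLit_notMem a ha ha'
    · exact hx (hL.mem_of_reflTransGen ha (hcontra ha'))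
    · exact hx (hL.mem_of_reflTransGen ha' (hR.reflTransGen ha))
    · exact hxx (ha.trans (hcontra ha'))
  mem_of_rel := by
    rintro a (ha | ha) b hab
    · exact .inl (hL.mem_of_rel a ha b hab)
    · exact .inr (ha.tail hab)

end IsPartialModel

lemma SkewSymmetric.exists_total_isPartialModel (hR : SkewSymmetric R)
    (hcycle : ∀ x, Relation.ReflTransGen R x (negLit x) →
      ¬ Relation.ReflTransGen R (negLit x) x) :
    ∃ L, IsPartialModel R L ∧ ∀ x, x ∈ L ∨ negLit x ∈ L := by
  obtain ⟨L, hL⟩ := zorn_subset {L | IsPartialModel R L} fun c hc hchain =>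
    ⟨⋃₀ c, IsPartialModel.sUnion hc hchain, fun _ => Set.subset_sUnion_of_mem⟩
  have hdecided : ∀ x, ¬ Relation.ReflTransGen R x (negLit x) → x ∈ L ∨ negLit x ∈ L := by
    intro x hxx
    by_contra! hx
    have hle := hL.le_of_ge (hL.prop.union_reachable hR hx.2 hxx) Set.subset_union_left
    exact hx.1 (hle (.inr .refl))
  refine ⟨L, hL.prop, fun x => ?_⟩
  by_cases hxx : Relation.ReflTransGen R x (negLit x)
  · simpa [or_comm] using hdecided (negLit x) (by simpa using hcycle x hxx)
  · exact hdecided x hxx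

/-- The 2-SAT criterion of Aspvall, Plass and Tarjan. -/
theorem SkewSymmetric.exists_assignment (hR : SkewSymmetric R)
    (hcycle : ∀ x, Relation.ReflTransGen R x (negLit x) →
      ¬ Relation.ReflTransGen R (negLit x) x) :
    ∃ σ : α → Bool, ∀ a b, R a b → σ a.1 = a.2 → σ b.1 = b.2 := by
  obtain ⟨L, hL, htotal⟩ := hR.exists_total_isPartialModel hcycle
  have hmem : ∀ a : α × Bool, decide ((a.1, true) ∈ L) = a.2 ↔ a ∈ L := by
    rintro ⟨x, s⟩
    have hx : (x, true) ∉ L ↔ (x, false) ∈ L :=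
      ⟨(htotal (x, true)).resolve_left, fun h h' => hL.negLit_notMem _ h' h⟩
    cases s <;> simp [hx]
  exact ⟨fun x => decide ((x, true) ∈ L), fun a b hab ha =>
    (hmem b).2 (hL.mem_of_rel a ((hmem a).1 ha) b hab)⟩

/-- A bicycle for the implications `R`: a path `a :: l` through distinct variables which is entered
from a literal `u` on one of its variables and left for the negation of one of its literals `v`. -/
structure IsBicycle (R : α × Bool → α × Bool → Prop) (u v a : α × Bool)
    (l : List (α × Bool)) : Prop where
  nodup : ((a :: l).map Prod.fst).Nodup
  chain : (a :: l).IsChain R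
  fst_mem : u.1 ∈ (a :: l).map Prod.fst
  entry : R u a
  mem : v ∈ a :: l
  exit : R ((a :: l).getLast (List.cons_ne_nil a l)) (negLit v)

lemma exists_eq_append_cons_append_cons {β : Type*} {f : α → β} {w : List α}
    (hw : ¬ (w.map f).Nodup) : ∃ A x M y C, w = A ++ x :: (M ++ y :: C) ∧ f x = f y := by
  induction w with
  | nil => simp at hw
  | cons a w ih =>
    rw [List.map_cons, List.nodup_cons, not_and_or, not_not] at hw
    rcases hw with h | h
    · obtain ⟨y, hy, hya⟩ := List.mem_map.1 h
      obtain ⟨M, C, rfl⟩ := List.append_of_mem hy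
      exact ⟨[], a, M, y, C, rfl, hya.symm⟩
    · obtain ⟨A, x, M, y, C, rfl, hxy⟩ := ih h
      exact ⟨a :: A, x, M, y, C, rfl, hxy⟩

/-- If `x` and `y` are literals on the same variable and `x` precedes `y`, then either `x = y` and
the cycle between them can be cut out, or the path from `x` to `y = ¬x` is a shorter one. -/
lemma exists_shorter_chain_to_negLit {w : List (α × Bool)} (hne : w ≠ []) (hw : w.IsChain R)
    (hexit : R (w.getLast hne) (negLit (w.head hne))) (hdup : ¬ (w.map Prod.fst).Nodup) :
    ∃ w', ∃ hne' : w' ≠ [], w'.length < w.length ∧ w' ⊆ w ∧ w'.IsChain R ∧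
      R (w'.getLast hne') (negLit (w'.head hne')) := by
  obtain ⟨A, x, M, y, C, rfl, hxy⟩ := exists_eq_append_cons_append_cons hdup
  rw [List.isChain_split] at hw
  rcases eq_or_eq_negLit hxy with rfl | rfl
  · refine ⟨A ++ x :: C, by simp, ?_, fun z => ?_, ?_, ?_⟩
    · simp only [List.length_append, List.length_cons]
      omega
    · simp only [List.mem_append, List.mem_cons]
      tauto
    · exact List.isChain_split.2 ⟨hw.1, (List.isChain_cons_split.1 hw.2).2⟩
    · cases A <;> simpa [List.getLast_append, List.getLast_cons] using hexit
  · rw [← List.cons_append] at hw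
    obtain ⟨hM, -, hlast⟩ := List.isChain_append.1 hw.2
    refine ⟨negLit y :: M, by simp, ?_, fun z => ?_, hM, ?_⟩
    · simp only [List.length_append, List.length_cons]
      omega
    · simp only [List.mem_append, List.mem_cons]
      tauto
    · simpa using hlast _ (List.getLast?_eq_some_getLast (by simp)) y (by simp)

lemma exists_nodup_chain_to_negLit {w : List (α × Bool)} (hne : w ≠ []) (hw : w.IsChain R)
    (hexit : R (w.getLast hne) (negLit (w.head hne))) :
    ∃ w', ∃ hne' : w' ≠ [], w' ⊆ w ∧ (w'.map Prod.fst).Nodup ∧ w'.IsChain R ∧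
      ∃ v ∈ w', R (w'.getLast hne') (negLit v) := by
  induction hk : w.length using Nat.strong_induction_on generalizing w with
  | _ k ih =>
  by_cases hnodup : (w.map Prod.fst).Nodup
  · exact ⟨w, hne, List.Subset.refl w, hnodup, hw, w.head hne, List.head_mem hne, hexit⟩
  · obtain ⟨w₁, hne₁, hlt, hsub₁, hw₁, hexit₁⟩ :=
      exists_shorter_chain_to_negLit hne hw hexit hnodup
    obtain ⟨w', hne', hsub, hw'⟩ := ih _ (hk ▸ hlt) hne₁ hw₁ hexit₁ rfl
    exact ⟨w', hne', List.Subset.trans hsub hsub₁, hw'⟩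

variable [Finite α]

lemma exists_isBicycle_of_exists_pred {P : Set (α × Bool)} (hP : ∀ a ∈ P, ∃ u ∈ P, R u a)
    {w : List (α × Bool)} (hne : w ≠ []) (hwP : ∀ a ∈ w, a ∈ P) (hnodup : (w.map Prod.fst).Nodup)
    (hw : w.IsChain R) {v : α × Bool} (hv : v ∈ w) (hexit : R (w.getLast hne) (negLit v)) :
    ∃ u a l, IsBicycle R u v a l := by
  cases nonempty_fintype α
  induction hk : Fintype.card α - w.length using Nat.strong_induction_on generalizing w with
  | _ k ih =>
  obtain ⟨a, l, rfl⟩ := List.exists_cons_of_ne_nil hne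
  obtain ⟨u, huP, hu⟩ := hP a (hwP a List.mem_cons_self)
  by_cases hmem : u.1 ∈ (a :: l).map Prod.fst
  · exact ⟨u, a, l, hnodup, hw, hmem, hu, hv, hexit⟩
  have hnodup' : ((u :: a :: l).map Prod.fst).Nodup := List.nodup_cons.2 ⟨hmem, hnodup⟩
  have hlen : (a :: l).length < Fintype.card α := by
    simpa [Nat.succ_le_iff] using hnodup'.length_le_card
  refine ih _ ?_ (List.cons_ne_nil u _) ?_ hnodup' (List.isChain_cons_cons.2 ⟨hu, hw⟩)
    (List.mem_cons_of_mem u hv) ?_ rfl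
  · simp only [← hk, List.length_cons] at hlen ⊢
    omega
  · exact List.forall_mem_cons.2 ⟨huP, hwP⟩
  · rwa [List.getLast_cons (List.cons_ne_nil a l)]

theorem exists_isBicycle {x : α × Bool} (h : Relation.ReflTransGen R x (negLit x))
    (h' : Relation.ReflTransGen R (negLit x) x) : ∃ u v a l, IsBicycle R u v a l := by
  have hpred : ∀ a ∈ {y | Relation.ReflTransGen R x y}, ∃ u ∈ {y | Relation.ReflTransGen R x y},
      R u a := by
    intro a ha
    rcases Relation.ReflTransGen.cases_tail ha with rfl | ⟨c, hc, hca⟩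
    · rcases Relation.ReflTransGen.cases_tail h' with hxx | ⟨c, hc, hcx⟩
      · exact absurd hxx.symm (negLit_ne a)
      · exact ⟨c, h.trans hc, hcx⟩
    · exact ⟨c, hc, hca⟩
  rcases Relation.ReflTransGen.cases_tail h with hxx | ⟨c, hc, hcx⟩
  · exact absurd hxx (negLit_ne x)
  obtain ⟨l, hl, rfl⟩ := List.exists_isChain_cons_of_relationReflTransGen hc
  obtain ⟨w, hne, hsub, hnodup, hw, v, hv, hexit⟩ :=
    exists_nodup_chain_to_negLit (List.cons_ne_nil x l) hl hcx
  have hreach := hl.induction (Relation.ReflTransGen R x) _ (fun _ _ hab ha => ha.tail hab)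
    fun _ => .refl
  obtain ⟨u, a, l, hbicycle⟩ := exists_isBicycle_of_exists_pred hpred hne
    (fun a ha => hreach a (hsub ha)) hnodup hw hv hexit
  exact ⟨u, v, a, l, hbicycle⟩

end Literals

section Clauses

variable {n : ℕ}

/-- The clause `¬a ∨ b`, which expresses that the literal `a` implies the literal `b`. -/
def implClause (a b : Fin n × Bool) : Clause n := {negLit a, b}

lemma mem_implClause {a b x : Fin n × Bool} : x ∈ implClause a b ↔ x = negLit a ∨ x = b := by
  simp [implClause]

lemma implClause_negLit (a b : Fin n × Bool) :
    implClause (negLit b) (negLit a) = implClause a b := by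
  simp [implClause, Finset.pair_comm]

lemma satClause_implClause_iff {σ : Fin n → Bool} {a b : Fin n × Bool} :
    SatClause σ (implClause a b) ↔ (σ a.1 = a.2 → σ b.1 = b.2) := by
  simp [SatClause, mem_implClause, negLit, Bool.eq_not, imp_iff_not_or]

/-- The literal `a` implies the literal `b` by a single clause of `F`. -/
def Implies (F : Set (Clause n)) (a b : Fin n × Bool) : Prop := implClause a b ∈ F

lemma skewSymmetric_implies (F : Set (Clause n)) : SkewSymmetric (Implies F) := fun a b hab => by
  rwa [Implies, implClause_negLit]

/-- A clause consisting of two literals with distinct variables. -/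
def IsTwoClause (C : Clause n) : Prop := ∃ a b : Fin n × Bool, a.1 ≠ b.1 ∧ C = {a, b}

theorem exists_isBicycle_of_not_satInstance {m : ℕ} {I : Fin m → Clause n}
    (htwo : ∀ i, IsTwoClause (I i)) (hI : ¬ SatInstance I) :
    ∃ u v a l, IsBicycle (Implies (Set.range I)) u v a l := by
  by_contra hbicycle
  obtain ⟨σ, hσ⟩ := (skewSymmetric_implies (Set.range I)).exists_assignment fun x h h' =>
    hbicycle (exists_isBicycle h h')
  refine hI ⟨σ, fun i => ?_⟩
  obtain ⟨a, b, -, hab⟩ := htwo i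
  have himpl : I i = implClause (negLit a) b := by simp [hab, implClause]
  rw [himpl, satClause_implClause_iff]
  exact hσ _ _ ⟨i, himpl⟩

/-- The clauses expressing the consecutive implications along a list of literals. -/
def pathClauses : List (Fin n × Bool) → List (Clause n)
  | [] => []
  | [_] => []
  | a :: b :: l => implClause a b :: pathClauses (b :: l)

lemma length_pathClauses_cons (a : Fin n × Bool) (l : List (Fin n × Bool)) :
    (pathClauses (a :: l)).length = l.length := by
  induction l generalizing a with
  | nil => rfl
  | cons b l ih => simp [pathClauses, ih]

lemma mem_of_mem_pathClauses {F : Set (Clause n)} {w : List (Fin n × Bool)}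
    (hw : w.IsChain (Implies F)) {C : Clause n} (hC : C ∈ pathClauses w) : C ∈ F := by
  induction hw with
  | nil => simp [pathClauses] at hC
  | singleton => simp [pathClauses] at hC
  | cons_cons hab _ ih =>
    rcases List.mem_cons.1 hC with rfl | hC
    exacts [hab, ih hC]

lemma mem_or_negLit_mem_of_mem_pathClauses {a : Fin n × Bool} {l : List (Fin n × Bool)}
    {C : Clause n} (hC : C ∈ pathClauses (a :: l)) {x : Fin n × Bool} (hx : x ∈ C) :
    x ∈ l ∨ negLit x ∈ (a :: l).dropLast := by
  induction l generalizing a with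
  | nil => simp [pathClauses] at hC
  | cons b l ih =>
    rw [List.dropLast_cons_cons]
    rcases List.mem_cons.1 hC with rfl | hC
    · rcases mem_implClause.1 hx with rfl | rfl <;> simp
    · exact (ih hC).imp (List.mem_cons_of_mem b) (List.mem_cons_of_mem a)

lemma nodup_pathClauses {w : List (Fin n × Bool)} (hw : (w.map Prod.fst).Nodup) :
    (pathClauses w).Nodup := by
  induction w with
  | nil => simp [pathClauses]
  | cons a w ih =>
    cases w with
    | nil => simp [pathClauses]
    | cons b l =>
      obtain ⟨ha, hl⟩ := List.nodup_cons.1 hw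
      refine List.nodup_cons.2 ⟨fun h => ha ?_, ih hl⟩
      rcases mem_or_negLit_mem_of_mem_pathClauses h (x := negLit a) (mem_implClause.2 (.inl rfl))
        with h' | h'
      · exact List.mem_map.2 ⟨negLit a, List.mem_cons_of_mem b h', rfl⟩
      · exact List.mem_map.2 ⟨a, List.mem_of_mem_dropLast (by simpa using h'), rfl⟩

/-- The clauses of the bicycle along the path `a :: l` with end literals `u` and `negLit v`. -/
def bicycleClauses (u v a : Fin n × Bool) (l : List (Fin n × Bool)) : List (Clause n) :=
  implClause u a :: implClause ((a :: l).getLast (List.cons_ne_nil a l)) (negLit v) ::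
    pathClauses (a :: l)

lemma IsBicycle.mem_of_mem_bicycleClauses {F : Set (Clause n)} {u v a : Fin n × Bool}
    {l : List (Fin n × Bool)} (h : IsBicycle (Implies F) u v a l) {C : Clause n}
    (hC : C ∈ bicycleClauses u v a l) : C ∈ F := by
  simp only [bicycleClauses, List.mem_cons] at hC
  rcases hC with rfl | rfl | hC
  exacts [h.entry, h.exit, mem_of_mem_pathClauses h.chain hC]

lemma negLit_notMem_of_nodup {w : List (Fin n × Bool)} (hw : (w.map Prod.fst).Nodup)
    {x : Fin n × Bool} (hx : x ∈ w) : negLit x ∉ w := fun h =>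
  negLit_ne x (List.inj_on_of_nodup_map hw h hx rfl)

lemma nodup_bicycleClauses {u v a : Fin n × Bool} {l : List (Fin n × Bool)}
    (hnodup : ((a :: l).map Prod.fst).Nodup) (hv : v ∈ a :: l) :
    (bicycleClauses u v a l).Nodup := by
  have hneg := fun {x} (hx : x ∈ a :: l) => negLit_notMem_of_nodup hnodup hx
  have hne : ∀ x ∈ a :: l, a ≠ negLit x := fun x hx hax =>
    hneg hx (hax ▸ List.mem_cons_self)
  have hlast := List.getLast_mem (List.cons_ne_nil a l)
  have hnodup' := hnodup.of_map
  refine List.nodup_cons.2 ⟨?_, List.nodup_cons.2 ⟨fun h => ?_, nodup_pathClauses hnodup⟩⟩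
  · rw [List.mem_cons, not_or]
    constructor <;> intro h
    · have ha : a ∈ implClause u a := mem_implClause.2 (.inr rfl)
      rw [h, mem_implClause] at ha
      exact ha.elim (hne _ hlast) (hne v hv)
    · rcases mem_or_negLit_mem_of_mem_pathClauses h (x := a) (mem_implClause.2 (.inr rfl))
        with ha | ha
      · exact (List.nodup_cons.1 hnodup').1 ha
      · exact hneg List.mem_cons_self (List.mem_of_mem_dropLast ha)
  · rcases mem_or_negLit_mem_of_mem_pathClauses h (mem_implClause.2 (.inl rfl)) with h' | h'
    · exact hneg hlast (List.mem_cons_of_mem a h')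
    · rw [negLit_negLit] at h'
      rw [← List.dropLast_append_getLast (List.cons_ne_nil a l)] at hnodup'
      exact List.disjoint_of_nodup_append hnodup' h' (List.mem_singleton_self _)

end Clauses

section Balanced

variable {n : ℕ} {q : Clause n → ℝ} {c : ℝ}

/-- Weights of a random clause with two literals under which every literal is equally likely to
occur and no single clause has probability larger than `c / n ^ 2`. -/
structure IsBalanced (q : Clause n → ℝ) (c : ℝ) : Prop where
  mem_stdSimplex : q ∈ stdSimplex ℝ (Clause n)
  isTwoClause : ∀ C, q C ≠ 0 → IsTwoClause C
  sum_implClause : ∀ a, ∑ b, q (implClause a b) = 1 / n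
  le_div_sq : ∀ C, q C ≤ c / (n : ℝ) ^ 2

namespace IsBalanced

lemma nonneg (hq : IsBalanced q c) (C : Clause n) : 0 ≤ q C := hq.mem_stdSimplex.1 C

lemma mono (hq : IsBalanced q c) {c' : ℝ} (hc : c ≤ c') : IsBalanced q c' where
  __ := hq
  le_div_sq C := (hq.le_div_sq C).trans (by gcongr)

lemma prod_pathClauses_nonneg (hq : IsBalanced q c) (l : List (Fin n × Bool)) :
    0 ≤ ((pathClauses l).map q).prod :=
  List.prod_nonneg (by simpa using fun C _ => hq.nonneg C)

lemma sum_prod_pathClauses (hq : IsBalanced q c) (s : ℕ) (a : Fin n × Bool) :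
    ∑ w : Fin s → Fin n × Bool, ((pathClauses (a :: List.ofFn w)).map q).prod =
      (1 / (n : ℝ)) ^ s := by
  induction s generalizing a with
  | zero => simp [pathClauses]
  | succ s ih =>
    rw [← (Fin.consEquiv fun _ => Fin n × Bool).sum_comp, Fintype.sum_prod_type]
    simp only [Fin.consEquiv, Equiv.coe_fn_mk, List.ofFn_cons, pathClauses, List.map_cons,
      List.prod_cons, ← Finset.mul_sum, ih]
    rw [← Finset.sum_mul, hq.sum_implClause, pow_succ']

lemma prob_isBicycle_le (hq : IsBalanced q c) (m : ℕ) (u v a : Fin n × Bool)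
    (l : List (Fin n × Bool)) :
    prob q m (fun I => IsBicycle (Implies (Set.range I)) u v a l) ≤
      (m : ℝ) ^ (l.length + 2) * ((c / (n : ℝ) ^ 2) ^ 2 * ((pathClauses (a :: l)).map q).prod) := by
  have hpath := hq.prod_pathClauses_nonneg (a :: l)
  by_cases hnd : ((a :: l).map Prod.fst).Nodup ∧ v ∈ a :: l
  · have hnodup := nodup_bicycleClauses (u := u) hnd.1 hnd.2
    have hends : q (implClause u a) *
        q (implClause ((a :: l).getLast (List.cons_ne_nil a l)) (negLit v)) ≤
          (c / (n : ℝ) ^ 2) ^ 2 := by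
      rw [sq]
      exact mul_le_mul (hq.le_div_sq _) (hq.le_div_sq _) (hq.nonneg _)
        ((hq.nonneg _).trans (hq.le_div_sq (implClause u a)))
    calc prob q m (fun I => IsBicycle (Implies (Set.range I)) u v a l)
        ≤ prob q m (fun I => ↑(bicycleClauses u v a l).toFinset ⊆ Set.range I) :=
          prob_mono hq.nonneg fun I _ h C hC =>
            h.mem_of_mem_bicycleClauses (List.mem_toFinset.1 hC)
      _ ≤ (m : ℝ) ^ (bicycleClauses u v a l).length * ((bicycleClauses u v a l).map q).prod := by
          rw [← List.toFinset_card_of_nodup hnodup, ← List.prod_toFinset q hnodup]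
          exact prob_subset_range_le hq.mem_stdSimplex _ m
      _ ≤ _ := by
          simp only [bicycleClauses, List.length_cons, length_pathClauses_cons, List.map_cons,
            List.prod_cons, ← mul_assoc _ _ (List.prod _)]
          gcongr
  · have hzero : prob q m (fun I => IsBicycle (Implies (Set.range I)) u v a l) ≤ 0 :=
      (prob_mono hq.nonneg (E' := fun _ => False) fun I _ h => hnd ⟨h.nodup, h.mem⟩).trans_eq
        (by simp [prob])
    exact hzero.trans (by positivity)

/-- Union bound over the two literals that close a given path to a bicycle. -/
lemma prob_exists_isBicycle_le (hq : IsBalanced q c) (m : ℕ) (a : Fin n × Bool)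
    (l : List (Fin n × Bool)) :
    prob q m (fun I => ∃ u v, IsBicycle (Implies (Set.range I)) u v a l) ≤
      2 * ((l.length : ℝ) + 1) ^ 2 * ((m : ℝ) ^ (l.length + 2) *
        ((c / (n : ℝ) ^ 2) ^ 2 * ((pathClauses (a :: l)).map q).prod)) := by
  set ends := ((a :: l).toFinset.image Prod.fst ×ˢ (Finset.univ : Finset Bool)) ×ˢ
    (a :: l).toFinset
  have hpath := hq.prod_pathClauses_nonneg (a :: l)
  have hcard : ends.card ≤ 2 * (l.length + 1) ^ 2 := by
    have hlen : (a :: l).toFinset.card ≤ l.length + 1 := (a :: l).toFinset_card_le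
    calc ends.card = ((a :: l).toFinset.image Prod.fst).card * 2 * (a :: l).toFinset.card := by
          simp [ends, Finset.card_product]
      _ ≤ (l.length + 1) * 2 * (l.length + 1) := by
          gcongr
          exact Finset.card_image_le.trans hlen
      _ = 2 * (l.length + 1) ^ 2 := by ring
  calc prob q m (fun I => ∃ u v, IsBicycle (Implies (Set.range I)) u v a l)
      ≤ prob q m (fun I => ∃ e ∈ ends, IsBicycle (Implies (Set.range I)) e.1 e.2 a l) := by
        refine prob_mono hq.nonneg fun I _ ⟨u, v, h⟩ => ⟨(u, v), ?_, h⟩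
        have hu := h.fst_mem
        have hv := h.mem
        simp only [List.mem_map] at hu
        simp only [ends, Finset.mem_product, Finset.mem_image, List.mem_toFinset,
          Finset.mem_univ, and_true]
        exact ⟨hu, hv⟩
    _ ≤ ends.card • _ := (prob_exists_mem_le hq.nonneg _ _).trans <|
        Finset.sum_le_card_nsmul _ _ _ fun e _ => hq.prob_isBicycle_le m e.1 e.2 a l
    _ ≤ _ := by
        rw [nsmul_eq_mul]
        gcongr
        exact_mod_cast hcard

lemma prob_not_satInstance_le_sum (hq : IsBalanced q c) (m : ℕ) :
    prob q m (fun I => ¬ SatInstance I) ≤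
      ∑ s : Fin n, 4 * c ^ 2 * ((s : ℝ) + 1) ^ 2 * ((m : ℝ) / n) ^ ((s : ℕ) + 2) / n := by
  have hbicycle : ∀ I : Fin m → Clause n, (∀ i, q (I i) ≠ 0) → ¬ SatInstance I →
      ∃ (s : Fin n) (a : Fin n × Bool) (w : Fin s → Fin n × Bool), ∃ u v,
        IsBicycle (Implies (Set.range I)) u v a (List.ofFn w) := by
    intro I hI h
    obtain ⟨u, v, a, l, hl⟩ :=
      exists_isBicycle_of_not_satInstance (fun i => hq.isTwoClause _ (hI i)) h
    have hlen : l.length < n := by simpa [Nat.succ_le_iff] using hl.nodup.length_le_card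
    exact ⟨⟨l.length, hlen⟩, a, l.get, u, v, by simpa using hl⟩
  refine (prob_mono hq.nonneg hbicycle).trans <| (prob_exists_le hq.nonneg _).trans <|
    Finset.sum_le_sum fun s _ => ?_
  have hn : (n : ℝ) ≠ 0 := Nat.cast_ne_zero.2 s.pos.ne'
  calc prob q m (fun I => ∃ (a : Fin n × Bool) (w : Fin s → Fin n × Bool), ∃ u v,
        IsBicycle (Implies (Set.range I)) u v a (List.ofFn w))
      ≤ ∑ a : Fin n × Bool, ∑ w : Fin s → Fin n × Bool, 2 * ((s : ℝ) + 1) ^ 2 *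
          ((m : ℝ) ^ ((s : ℕ) + 2) * ((c / (n : ℝ) ^ 2) ^ 2 *
            ((pathClauses (a :: List.ofFn w)).map q).prod)) := by
        refine (prob_exists_le hq.nonneg _).trans (Finset.sum_le_sum fun a _ => ?_)
        refine (prob_exists_le hq.nonneg _).trans (Finset.sum_le_sum fun w _ => ?_)
        simpa using hq.prob_exists_isBicycle_le m a (List.ofFn w)
    _ = 2 * n * (2 * ((s : ℝ) + 1) ^ 2 *
          ((m : ℝ) ^ ((s : ℕ) + 2) * ((c / (n : ℝ) ^ 2) ^ 2 * (1 / (n : ℝ)) ^ (s : ℕ)))) := by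
        simp only [← Finset.mul_sum, hq.sum_prod_pathClauses, Finset.sum_const, Finset.card_univ,
          Fintype.card_prod, Fintype.card_fin, Fintype.card_bool, nsmul_eq_mul]
        push_cast
        ring
    _ = 4 * c ^ 2 * ((s : ℝ) + 1) ^ 2 * ((m : ℝ) / n) ^ ((s : ℕ) + 2) / n := by
        simp only [div_pow, one_pow, pow_add]
        field_simp
        ring

end IsBalanced

lemma exists_forall_isBalanced_prob_not_satInstance_le (c : ℝ) {ρ : ℝ} (hρ : 0 ≤ ρ) (hρ1 : ρ < 1) :
    ∃ M : ℝ, ∀ (n : ℕ) (q : Clause n → ℝ) (m : ℕ), IsBalanced q c → (m : ℝ) / n ≤ ρ →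
      prob q m (fun I => ¬ SatInstance I) ≤ M / n := by
  have hsum : Summable fun s : ℕ => ((s : ℝ) + 1) ^ 2 * ρ ^ (s + 2) := by
    have h := (summable_nat_add_iff 1).2
      (summable_pow_mul_geometric_of_norm_lt_one 2 (r := ρ) (by rwa [Real.norm_of_nonneg hρ]))
    refine (h.mul_right ρ).congr fun s => ?_
    push_cast
    ring
  refine ⟨4 * c ^ 2 * ∑' s : ℕ, ((s : ℝ) + 1) ^ 2 * ρ ^ (s + 2), fun n q m hq hm => ?_⟩
  calc prob q m (fun I => ¬ SatInstance I)
      ≤ ∑ s : Fin n, 4 * c ^ 2 * (((s : ℕ) : ℝ) + 1) ^ 2 * ρ ^ ((s : ℕ) + 2) / n :=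
        (hq.prob_not_satInstance_le_sum m).trans (by gcongr)
    _ = 4 * c ^ 2 * (∑ s ∈ Finset.range n, ((s : ℝ) + 1) ^ 2 * ρ ^ (s + 2)) / n := by
        simp only [← Fin.sum_univ_eq_sum_range (fun s : ℕ => ((s : ℝ) + 1) ^ 2 * ρ ^ (s + 2)),
          Finset.mul_sum, Finset.sum_div, mul_assoc]
    _ ≤ 4 * c ^ 2 * (∑' s : ℕ, ((s : ℝ) + 1) ^ 2 * ρ ^ (s + 2)) / n := by
        gcongr
        exact hsum.sum_le_tsum _ fun s _ => by positivity

theorem tendsto_prob_satInstance_one {ι : Type*} {f : Filter ι} {n m : ι → ℕ}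
    {q : ∀ i, Clause (n i) → ℝ} {r : ℝ} (hq : ∀ᶠ i in f, IsBalanced (q i) c)
    (hn : Tendsto n f atTop) (hm : Tendsto (fun i => (m i : ℝ) / n i) f (nhds r)) (hr : r < 1) :
    Tendsto (fun i => prob (q i) (m i) SatInstance) f (nhds 1) := by
  obtain ⟨ρ, hrρ, hρ1⟩ := exists_between (max_lt hr one_pos)
  obtain ⟨M, hM⟩ := exists_forall_isBalanced_prob_not_satInstance_le c
    ((le_max_right r 0).trans hrρ.le) hρ1
  have hlim : Tendsto (fun i => 1 - M / (n i : ℝ)) f (nhds 1) := by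
    simpa using ((tendsto_natCast_atTop_atTop.comp hn).const_div_atTop M).const_sub 1
  refine tendsto_of_tendsto_of_tendsto_of_le_of_le' hlim tendsto_const_nhds ?_
    (hq.mono fun i hqi => prob_le_one hqi.mem_stdSimplex _)
  filter_upwards [hq, hm.eventually_le_const ((le_max_left r 0).trans_lt hrρ)] with i hqi hmi
  linarith [hM _ _ _ hqi hmi,
    prob_add_prob_not hqi.mem_stdSimplex.2 (SatInstance : (Fin (m i) → Clause (n i)) → Prop)]

end Balanced

section Path

variable {α : Type*} {R : α × Bool → α × Bool → Prop} {w : ℕ → α × Bool} {K : ℕ}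

/-- The first `K` terms of `w` form a path of `R` through distinct variables; the other terms are
irrelevant. -/
structure IsPath (R : α × Bool → α × Bool → Prop) (K : ℕ) (w : ℕ → α × Bool) : Prop where
  injOn : Set.InjOn (fun i => (w i).1) (Set.Iio K)
  rel : ∀ i, i + 1 < K → R (w i) (w (i + 1))

namespace IsPath

lemma imp {R' : α × Bool → α × Bool → Prop} (hw : IsPath R K w) (h : ∀ a b, R a b → R' a b) :
    IsPath R' K w where
  injOn := hw.injOn
  rel i hi := h _ _ (hw.rel i hi)

lemma mono {L : ℕ} (hw : IsPath R K w) (hL : L ≤ K) : IsPath R L w where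
  injOn := hw.injOn.mono (Set.Iio_subset_Iio hL)
  rel i hi := hw.rel i (hi.trans_le hL)

lemma reverse (hR : SkewSymmetric R) (hw : IsPath R K w) :
    IsPath R K fun i => negLit (w (K - 1 - i)) where
  injOn i hi j hj hij := by
    simp only [Set.mem_Iio] at hi hj
    have hindex := hw.injOn (Set.mem_Iio.2 (by omega)) (Set.mem_Iio.2 (by omega)) hij
    omega
  rel i hi := by
    have h := hw.rel (K - 1 - (i + 1)) (by omega)
    rw [show K - 1 - (i + 1) + 1 = K - 1 - i by omega] at h
    exact hR h

end IsPath

lemma exists_isPath_of_isChain (hK : 0 < K) {U : List (α × Bool)} (hU : K ≤ U.length)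
    (hnodup : (U.map Prod.fst).Nodup) (hchain : U.IsChain fun b a => R a b) :
    ∃ w, IsPath R K w := by
  have hpos : ∀ i, K - 1 - i < U.length := by omega
  refine ⟨fun i => U[K - 1 - i]'(hpos i), ⟨fun i hi j hj hij => ?_, fun i hi => ?_⟩⟩
  · have h : (U.map Prod.fst)[K - 1 - i]'(by simpa using hpos i) =
        (U.map Prod.fst)[K - 1 - j]'(by simpa using hpos j) := by
      simpa only [List.getElem_map] using hij
    rw [hnodup.getElem_inj_iff] at h
    simp only [Set.mem_Iio] at hi hj
    omega
  · have h := List.isChain_iff_getElem.1 hchain (K - 1 - (i + 1)) (by omega)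
    simpa only [show K - 1 - (i + 1) + 1 = K - 1 - i by omega] using h

end Path

section Search

variable {n : ℕ}

/-- The implications expressed by the clauses of `F` contain a path of `K` literals with distinct
variables. -/
def HasPath (K : ℕ) (F : Set (Clause n)) : Prop := ∃ w, IsPath (Implies F) K w

lemma HasPath.mono {K : ℕ} {F G : Set (Clause n)} (h : HasPath K F) (hFG : F ⊆ G) :
    HasPath K G :=
  h.imp fun _ hw => hw.imp fun _ _ hab => hFG hab

/-- A state of the depth-first search for a long path of implications: the variables visited so
far, the current path with its last literal first, the literals at which the search has
backtracked, and the clauses that have been found to be absent or present. -/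
structure SearchState (n : ℕ) where
  visited : Finset (Fin n)
  path : List (Fin n × Bool)
  exhausted : Finset (Fin n × Bool)
  absent : Finset (Clause n)
  found : Set (Clause n)

namespace SearchState

/-- Start a new path at the variable `x`. -/
def restart (s : SearchState n) (x : Fin n) : SearchState n :=
  { s with visited := insert x s.visited, path := [(x, true)] }

/-- Give up the last literal `a` of the current path, `U` being the rest of the path. -/
def backtrack (s : SearchState n) (a : Fin n × Bool) (U : List (Fin n × Bool)) : SearchState n :=
  { s with path := U, exhausted := insert a s.exhausted }

/-- Record that the clause `C` is absent. -/
def markAbsent (s : SearchState n) (C : Clause n) : SearchState n :=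
  { s with absent := insert C s.absent }

/-- Record that the clause `C` is present and extend the current path by `b`. -/
def extend (s : SearchState n) (C : Clause n) (b : Fin n × Bool) : SearchState n :=
  { s with visited := insert b.1 s.visited, path := b :: s.path, found := insert C s.found }

/-- The invariants of the search; in particular all clauses from an exhausted literal to an
unvisited variable are absent. -/
structure IsValid (s : SearchState n) : Prop where
  nodup : (s.path.map Prod.fst).Nodup
  chain : s.path.IsChain fun b a => Implies s.found a b
  mem_visited_of_path : ∀ a ∈ s.path, a.1 ∈ s.visited
  mem_visited_of_exhausted : ∀ a ∈ s.exhausted, a.1 ∈ s.visited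
  subset_union : s.visited ⊆ (s.path.map Prod.fst).toFinset ∪ s.exhausted.image Prod.fst
  mem_absent : ∀ a ∈ s.exhausted, ∀ b, b.1 ∉ s.visited → implClause a b ∈ s.absent

namespace IsValid

variable {s : SearchState n}

lemma initial : IsValid (⟨∅, [], ∅, ∅, ∅⟩ : SearchState n) := by
  constructor <;> simp

lemma restart (hs : s.IsValid) (hpath : s.path = []) (x : Fin n) : (s.restart x).IsValid where
  nodup := List.nodup_singleton x
  chain := .singleton _
  mem_visited_of_path := by simp [SearchState.restart]
  mem_visited_of_exhausted a ha := Finset.mem_insert_of_mem (hs.mem_visited_of_exhausted a ha)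
  subset_union := by
    have h := hs.subset_union
    rw [hpath] at h
    refine Finset.insert_subset (by simp [SearchState.restart]) fun y hy => ?_
    exact Finset.mem_union_right _ (by simpa [SearchState.restart] using h hy)
  mem_absent a ha b hb := hs.mem_absent a ha b fun h => hb (Finset.mem_insert_of_mem h)

lemma backtrack (hs : s.IsValid) {a : Fin n × Bool} {U : List (Fin n × Bool)}
    (hpath : s.path = a :: U) (ha : ∀ b, b.1 ∉ s.visited → implClause a b ∈ s.absent) :
    (s.backtrack a U).IsValid where
  nodup := (hpath ▸ hs.nodup : ((a :: U).map Prod.fst).Nodup).of_cons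
  chain := (hpath ▸ hs.chain : (a :: U).IsChain _).tail
  mem_visited_of_path b hb := hs.mem_visited_of_path b (hpath ▸ List.mem_cons_of_mem a hb)
  mem_visited_of_exhausted :=
    Finset.forall_mem_insert .. |>.2 ⟨hs.mem_visited_of_path a (hpath ▸ List.mem_cons_self),
      hs.mem_visited_of_exhausted⟩
  subset_union := by
    have h := hs.subset_union
    simpa [hpath, SearchState.backtrack, Finset.image_insert] using h
  mem_absent := Finset.forall_mem_insert .. |>.2 ⟨ha, hs.mem_absent⟩

lemma markAbsent (hs : s.IsValid) (C : Clause n) : (s.markAbsent C).IsValid where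
  __ := hs
  mem_absent a ha b hb := Finset.mem_insert_of_mem (hs.mem_absent a ha b hb)

lemma extend (hs : s.IsValid) {a b : Fin n × Bool} {U : List (Fin n × Bool)}
    (hpath : s.path = a :: U) (hb : b.1 ∉ s.visited) :
    (s.extend (implClause a b) b).IsValid where
  nodup := List.nodup_cons.2 ⟨fun h => by
    obtain ⟨x, hx, hxb⟩ := List.mem_map.1 h
    exact hb (hxb ▸ hs.mem_visited_of_path x hx), hs.nodup⟩
  chain := by
    have h := hs.chain.imp (S := fun b' a' => Implies (insert (implClause a b) s.found) a' b')
      fun _ _ => Set.mem_insert_of_mem _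
    rw [hpath] at h
    simp only [SearchState.extend, hpath]
    exact .cons_cons (Set.mem_insert _ _) h
  mem_visited_of_path := List.forall_mem_cons.2 ⟨Finset.mem_insert_self _ _,
    fun x hx => Finset.mem_insert_of_mem (hs.mem_visited_of_path x hx)⟩
  mem_visited_of_exhausted x hx := Finset.mem_insert_of_mem (hs.mem_visited_of_exhausted x hx)
  subset_union := by
    simpa [SearchState.extend] using Finset.insert_subset_insert b.1 hs.subset_union
  mem_absent x hx b' hb' := hs.mem_absent x hx b' fun h => hb' (Finset.mem_insert_of_mem h)

lemma card_visited_le (hs : s.IsValid) :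
    s.visited.card ≤ s.path.length + s.exhausted.card :=
  calc s.visited.card
      ≤ (s.path.map Prod.fst).toFinset.card + (s.exhausted.image Prod.fst).card :=
        (Finset.card_le_card hs.subset_union).trans (Finset.card_union_le _ _)
    _ ≤ s.path.length + s.exhausted.card := by
        gcongr
        · simpa using List.toFinset_card_le (s.path.map Prod.fst)
        · exact Finset.card_image_le

lemma hasPath (hs : s.IsValid) {K : ℕ} (hK : 0 < K) (hlen : K ≤ s.path.length) :
    HasPath K s.found :=
  exists_isPath_of_isChain hK hlen hs.nodup hs.chain

end IsValid

end SearchState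

/-- The probability that the search in state `s` fails to find a path of length `K` although it may
examine all clauses: `k` independent random clauses avoid the clauses known to be absent and
produce no such path together with the clauses already found. -/
noncomputable def failProb (q : Clause n → ℝ) (K k : ℕ) (s : SearchState n) : ℝ :=
  prob q k fun J => (∀ i, J i ∉ s.absent) ∧ ¬ HasPath K (s.found ∪ Set.range J)

variable {q : Clause n → ℝ} {K : ℕ} {s : SearchState n}

lemma failProb_le_exp (hq : q ∈ stdSimplex ℝ (Clause n)) (K k : ℕ) (s : SearchState n) :
    failProb q K k s ≤ Real.exp (-(k * ∑ C ∈ s.absent, q C)) :=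
  (prob_mono hq.1 fun _ _ h => h.1).trans (prob_forall_notMem_le_exp hq k s.absent)

lemma failProb_eq_zero (hs : s.IsValid) (hK : 0 < K) (hlen : K ≤ s.path.length) (k : ℕ) :
    failProb q K k s = 0 := by
  have hpath : ∀ J : Fin k → Clause n, HasPath K (s.found ∪ Set.range J) := fun J =>
    (hs.hasPath hK hlen).mono Set.subset_union_left
  simp [failProb, prob, hpath]

/-- Examining the clause `C`: it is absent, or it is one of the `k + 1` remaining clauses. -/
lemma failProb_succ_le (hq : ∀ C, 0 ≤ q C) (K k : ℕ) (s : SearchState n) (C : Clause n)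
    (b : Fin n × Bool) :
    failProb q K (k + 1) s ≤ failProb q K (k + 1) (s.markAbsent C) +
      (k + 1 : ℕ) * (q C * failProb q K k (s.extend C b)) := by
  refine (prob_succ_le_add hq C (E' := fun J => (∀ i, J i ∉ (s.extend C b).absent) ∧
    ¬ HasPath K ((s.extend C b).found ∪ Set.range J)) fun I i hi hI => ?_).trans
    (add_le_add_left (prob_mono hq fun I _ hI => ?_) _)
  · refine ⟨fun j => hI.1 _, fun hpath => hI.2 (hpath.mono ?_)⟩
    rintro D (((rfl : D = C) | hD) | ⟨j, rfl⟩)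
    exacts [.inr ⟨i, hi⟩, .inl hD, .inr ⟨_, rfl⟩]
  · exact ⟨fun i => Finset.mem_insert.not.2 (not_or.2 ⟨hI.1 i, hI.2.1 i⟩), hI.2.2⟩

lemma potential_step {x y W θ γ m : ℝ} (hy : 0 < y) (d : ℕ)
    (hstep : Real.exp (-(θ * x)) + m * x / y ≤ 1) :
    y ^ (d + 1) * Real.exp (-(θ * (x + W)) - γ) + m * (x * (y ^ d * Real.exp (-(θ * W) - γ))) ≤
      y ^ (d + 1) * Real.exp (-(θ * W) - γ) := by
  have hexp : Real.exp (-(θ * (x + W)) - γ) =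
      Real.exp (-(θ * W) - γ) * Real.exp (-(θ * x)) := by
    rw [← Real.exp_add]
    congr 1
    ring
  calc _ = y ^ (d + 1) * Real.exp (-(θ * W) - γ) * (Real.exp (-(θ * x)) + m * x / y) := by
        rw [hexp, pow_succ]
        field_simp
    _ ≤ y ^ (d + 1) * Real.exp (-(θ * W) - γ) := mul_le_of_le_one_right (by positivity) hstep

lemma failProb_succ_le_of_markAbsent_of_extend (hq : ∀ C, 0 ≤ q C) {C : Clause n}
    (hC : C ∉ s.absent) {b : Fin n × Bool} {y θ γ m : ℝ} (hy : 0 < y) {d k : ℕ}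
    (hkm : ((k + 1 : ℕ) : ℝ) ≤ m) (hstep : Real.exp (-(θ * q C)) + m * q C / y ≤ 1)
    (habsent : failProb q K (k + 1) (s.markAbsent C) ≤
      y ^ (d + 1) * Real.exp (-(θ * ∑ D ∈ (s.markAbsent C).absent, q D) - γ))
    (hfound : failProb q K k (s.extend C b) ≤
      y ^ d * Real.exp (-(θ * ∑ D ∈ (s.extend C b).absent, q D) - γ)) :
    failProb q K (k + 1) s ≤ y ^ (d + 1) * Real.exp (-(θ * ∑ D ∈ s.absent, q D) - γ) := by
  simp only [SearchState.markAbsent, Finset.sum_insert hC] at habsent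
  calc failProb q K (k + 1) s
      ≤ _ + (k + 1 : ℕ) * (q C * _) :=
        (failProb_succ_le hq K k s C b).trans <| add_le_add habsent <|
          mul_le_mul_of_nonneg_left (mul_le_mul_of_nonneg_left hfound (hq C)) (by positivity)
    _ ≤ _ + m * (q C * _) :=
        add_le_add_right (mul_le_mul_of_nonneg_right hkm (mul_nonneg (hq C) (by positivity))) _
    _ ≤ _ := potential_step hy d hstep

lemma failProb_le_of_le_sum_absent (hq : q ∈ stdSimplex ℝ (Clause n)) {θ β M : ℝ} (hβ : 0 ≤ β)
    {k : ℕ} (hk : θ + β ≤ k) (hM : M ≤ ∑ C ∈ s.absent, q C) :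
    failProb q K k s ≤ Real.exp (-(θ * ∑ C ∈ s.absent, q C) - β * M) := by
  refine (failProb_le_exp hq K k s).trans (Real.exp_le_exp.2 ?_)
  have hW : 0 ≤ ∑ C ∈ s.absent, q C := Finset.sum_nonneg fun C _ => hq.1 C
  linarith [mul_le_mul_of_nonneg_left hM hβ, mul_le_mul_of_nonneg_right hk hW]

/-- Every clause examined is either absent, which lowers the exponential, or present, which uses
up one of the `d` variables still to be visited; by `hstep` the bound decreases on average. -/
theorem failProb_le (hq : q ∈ stdSimplex ℝ (Clause n)) (hK : 0 < K) {v : ℕ} (hv : v ≤ n)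
    {θ β y m M : ℝ} (hθ : 0 ≤ θ) (hβ : 0 ≤ β) (hy : 1 ≤ y)
    (hstep : ∀ C, Real.exp (-(θ * q C)) + m * q C / y ≤ 1)
    (hend : ∀ s : SearchState n, s.IsValid → s.visited.card = v → s.path.length < K →
      M ≤ ∑ C ∈ s.absent, q C)
    {d k : ℕ} (hk : θ + β + d ≤ k) (hkm : (k : ℝ) ≤ m) {s : SearchState n} (hs : s.IsValid)
    (hd : s.visited.card + d = v) :
    failProb q K k s ≤ y ^ d * Real.exp (-(θ * ∑ C ∈ s.absent, q C) - β * M) := by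
  induction d generalizing k s with
  | zero =>
    rcases le_or_gt K s.path.length with hlen | hlen
    · rw [failProb_eq_zero hs hK hlen]
      positivity
    · rw [pow_zero, one_mul]
      exact failProb_le_of_le_sum_absent hq hβ (by simpa using hk) (hend s hs hd hlen)
  | succ d ihd =>
    push_cast at hk
    induction hN : s.path.length + s.absentᶜ.card using Nat.strong_induction_on generalizing s with
    | _ N ihN =>
    rcases hpath : s.path with _ | ⟨a, U⟩
    · obtain ⟨x, -, hx⟩ := Finset.exists_mem_notMem_of_card_lt_card
        (s := s.visited) (t := Finset.univ) (by rw [Finset.card_fin]; omega)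
      refine (ihd (by linarith) hkm (hs.restart hpath x) ?_).trans ?_
      · rw [SearchState.restart, Finset.card_insert_of_notMem hx]
        omega
      · exact mul_le_mul_of_nonneg_right (pow_le_pow_right₀ hy d.le_succ) (Real.exp_pos _).le
    by_cases hall : ∀ b, b.1 ∉ s.visited → implClause a b ∈ s.absent
    · have hlt : (s.backtrack a U).path.length < s.path.length := by
        simp [hpath, SearchState.backtrack]
      exact ihN _ (hN ▸ Nat.add_lt_add_right hlt _) (s := s.backtrack a U)
        (hs.backtrack hpath hall) hd rfl
    push Not at hall
    obtain ⟨b, hb, hC⟩ := hall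
    obtain ⟨k, rfl⟩ : ∃ k', k = k' + 1 := Nat.exists_eq_succ_of_ne_zero fun hk0 => by
      rw [hk0, Nat.cast_zero] at hk
      linarith [d.cast_nonneg (α := ℝ)]
    have hlt : (s.markAbsent (implClause a b)).absentᶜ.card < s.absentᶜ.card :=
      Finset.card_lt_card (Finset.compl_ssubset_compl.2 (Finset.ssubset_insert hC))
    push_cast at hk
    exact failProb_succ_le_of_markAbsent_of_extend hq.1 hC (one_pos.trans_le hy) hkm (hstep _)
      (ihN _ (hN ▸ Nat.add_lt_add_left hlt _) (hs.markAbsent (implClause a b)) hd rfl)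
      (ihd (by linarith) ((Nat.cast_le.2 k.le_succ).trans hkm) (hs.extend hpath hb)
        (by rw [SearchState.extend, Finset.card_insert_of_notMem hb]; omega))

lemma implClause_injOn (V : Finset (Fin n)) :
    Set.InjOn (fun x : (Fin n × Bool) × (Fin n × Bool) => implClause x.1 x.2)
      {x | x.1.1 ∈ V ∧ x.2.1 ∉ V} := by
  rintro ⟨a, b⟩ ⟨ha, hb⟩ ⟨a', b'⟩ ⟨ha', hb'⟩ (h : implClause a b = implClause a' b')
  have hmem : ∀ x, (x = negLit a ∨ x = b) ↔ (x = negLit a' ∨ x = b') := fun x => by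
    rw [← mem_implClause, h, mem_implClause]
  have hb_eq : b = b' := ((hmem b).1 (.inr rfl)).resolve_left fun h => hb (h ▸ ha')
  have ha_eq : negLit a = negLit a' :=
    ((hmem (negLit a)).1 (.inl rfl)).resolve_right fun h => hb' (h ▸ ha)
  rw [hb_eq, ← negLit_negLit a, ha_eq, negLit_negLit]

lemma card_filter_fst_mem (V : Finset (Fin n)) :
    (Finset.univ.filter fun b : Fin n × Bool => b.1 ∈ V).card = 2 * V.card := by
  have hprod : (Finset.univ.filter fun b : Fin n × Bool => b.1 ∈ V) = V ×ˢ Finset.univ := by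
    ext
    simp
  rw [hprod, Finset.card_product, Finset.card_univ, Fintype.card_bool, mul_comm]

namespace IsBalanced

variable {c : ℝ}

lemma le_sum_implClause_notMem (hq : IsBalanced q c) (a : Fin n × Bool) (V : Finset (Fin n)) :
    1 / (n : ℝ) - 2 * V.card * (c / (n : ℝ) ^ 2) ≤ ∑ b with b.1 ∉ V, q (implClause a b) := by
  have hsplit := Finset.sum_filter_add_sum_filter_not Finset.univ
    (fun b : Fin n × Bool => b.1 ∈ V) fun b => q (implClause a b)
  rw [hq.sum_implClause] at hsplit
  have hle := Finset.sum_le_card_nsmul (Finset.univ.filter fun b : Fin n × Bool => b.1 ∈ V)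
    (fun b => q (implClause a b)) _ fun b _ => hq.le_div_sq _
  rw [card_filter_fst_mem, nsmul_eq_mul] at hle
  push_cast at hle
  linarith

lemma le_sum_absent (hq : IsBalanced q c) {s : SearchState n} (hs : s.IsValid) :
    s.exhausted.card * (1 / (n : ℝ) - 2 * s.visited.card * (c / (n : ℝ) ^ 2)) ≤
      ∑ C ∈ s.absent, q C := by
  set pairs := s.exhausted ×ˢ Finset.univ.filter fun b : Fin n × Bool => b.1 ∉ s.visited
  have hinj : Set.InjOn (fun x : (Fin n × Bool) × (Fin n × Bool) => implClause x.1 x.2) pairs :=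
    (implClause_injOn s.visited).mono fun x hx => by
      simp only [pairs, Finset.mem_coe, Finset.mem_product, Finset.mem_filter] at hx
      exact ⟨hs.mem_visited_of_exhausted _ hx.1, hx.2.2⟩
  calc _ ≤ ∑ a ∈ s.exhausted, ∑ b with b.1 ∉ s.visited, q (implClause a b) := by
        rw [← nsmul_eq_mul]
        exact Finset.card_nsmul_le_sum _ _ _ fun a _ => hq.le_sum_implClause_notMem a s.visited
    _ = ∑ C ∈ pairs.image fun x => implClause x.1 x.2, q C := by
        rw [Finset.sum_image hinj, Finset.sum_product]
    _ ≤ ∑ C ∈ s.absent, q C := by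
        refine Finset.sum_le_sum_of_subset_of_nonneg (Finset.image_subset_iff.2 fun x hx => ?_)
          fun C _ _ => hq.nonneg C
        simp only [pairs, Finset.mem_product, Finset.mem_filter] at hx
        exact hs.mem_absent _ hx.1 _ hx.2.2

theorem prob_not_hasPath_le (hq : IsBalanced q c) (hK : 0 < K) {v m : ℕ} (hv : v ≤ n)
    {θ β y : ℝ} (hθ : 0 ≤ θ) (hβ : 0 ≤ β) (hy : 1 ≤ y) (hm : θ + β + v ≤ m)
    (hstep : ∀ C, Real.exp (-(θ * q C)) + m * q C / y ≤ 1)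
    (hescape : 0 ≤ 1 / (n : ℝ) - 2 * v * (c / (n : ℝ) ^ 2)) :
    prob q m (fun J => ¬ HasPath K (Set.range J)) ≤ y ^ v * Real.exp
      (-(β * (((v : ℝ) - K) * (1 / (n : ℝ) - 2 * v * (c / (n : ℝ) ^ 2))))) := by
  have hend : ∀ s : SearchState n, s.IsValid → s.visited.card = v → s.path.length < K →
      ((v : ℝ) - K) * (1 / (n : ℝ) - 2 * v * (c / (n : ℝ) ^ 2)) ≤ ∑ C ∈ s.absent, q C := by
    rintro s hs rfl hlen
    have hcard : (s.visited.card : ℝ) ≤ K + s.exhausted.card := by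
      exact_mod_cast hs.card_visited_le.trans (by gcongr)
    exact (mul_le_mul_of_nonneg_right (by linarith) hescape).trans (hq.le_sum_absent hs)
  simpa [failProb] using failProb_le hq.mem_stdSimplex hK hv hθ hβ hy hstep hend hm le_rfl
    SearchState.IsValid.initial (Finset.card_empty ▸ Nat.zero_add v)

end IsBalanced

end Search

section Spread

variable {n : ℕ} {q : Clause n → ℝ} {κ : ℝ}

/-- On every path of clauses of positive weight, two consecutive literals together have weight at
least `κ` of occurring in a clause with a given earlier literal of the path. -/
def IsSpread (q : Clause n → ℝ) (κ : ℝ) : Prop :=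
  ∀ ⦃w K⦄, IsPath (Implies (Function.support q)) K w →
    ∀ i j, j < i → i + 1 < K → κ ≤ q {w j, w i} + q {w j, w (i + 1)}

lemma sum_range_two_mul {M : Type*} [AddCommMonoid M] (f : ℕ → M) (h : ℕ) :
    ∑ x ∈ Finset.range (2 * h), f x = ∑ i ∈ Finset.range h, (f (2 * i) + f (2 * i + 1)) := by
  induction h with
  | zero => simp
  | succ h ih => rw [Nat.mul_succ, Finset.sum_range_succ, Finset.sum_range_succ, ih,
      Finset.sum_range_succ, add_assoc]

lemma injOn_pair_of_injOn {α : Type*} [DecidableEq α] {w : ℕ → α} {h K : ℕ}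
    (hw : Set.InjOn w (Set.Iio (h + K))) :
    Set.InjOn (fun x : ℕ × ℕ => ({w x.1, w (h + x.2)} : Finset α))
      (Finset.range h ×ˢ Finset.range K : Finset (ℕ × ℕ)) := by
  rintro ⟨j, x⟩ hjx ⟨j', x'⟩ hjx' (heq : ({w j, w (h + x)} : Finset α) = {w j', w (h + x')})
  simp only [Finset.coe_product, Finset.coe_range, Set.mem_prod, Set.mem_Iio] at hjx hjx'
  have hindex : ∀ y < h + K, ∀ z < h + K, w y = w z → y = z := fun y hy z hz => hw hy hz
  have hj : w j ∈ ({w j', w (h + x')} : Finset α) := heq ▸ Finset.mem_insert_self _ _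
  have hx : w (h + x) ∈ ({w j', w (h + x')} : Finset α) := heq ▸ by simp
  rw [Finset.mem_insert, Finset.mem_singleton] at hj hx
  have hj' : j = j' ∨ j = h + x' :=
    hj.imp (hindex _ (by omega) _ (by omega)) (hindex _ (by omega) _ (by omega))
  have hx' : h + x = j' ∨ h + x = h + x' :=
    hx.imp (hindex _ (by omega) _ (by omega)) (hindex _ (by omega) _ (by omega))
  rw [Prod.mk.injEq]
  omega

lemma IsSpread.exists_clauses (hs : IsSpread q κ) {h : ℕ} {w : ℕ → Fin n × Bool}
    (hw : IsPath (Implies (Function.support q)) (3 * h) w) :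
    ∃ Z : Finset (Clause n), (h : ℝ) ^ 2 * κ ≤ ∑ C ∈ Z, q C ∧
      ∀ C ∈ Z, ∀ σ, SatClause σ C → ∃ i < 3 * h, σ (w i).1 = (w i).2 := by
  have hinj : Set.InjOn w (Set.Iio (h + 2 * h)) := by
    rw [show h + 2 * h = 3 * h by omega]
    exact fun i hi j hj hij => hw.injOn hi hj (congrArg Prod.fst hij)
  refine ⟨(Finset.range h ×ˢ Finset.range (2 * h)).image fun x => {w x.1, w (h + x.2)}, ?_, ?_⟩
  · rw [Finset.sum_image (injOn_pair_of_injOn hinj), Finset.sum_product]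
    calc (h : ℝ) ^ 2 * κ = ∑ _j ∈ Finset.range h, ∑ _i ∈ Finset.range h, κ := by
          simp only [Finset.sum_const, Finset.card_range, nsmul_eq_mul]
          ring
      _ ≤ _ := by
          simp only [sum_range_two_mul]
          refine Finset.sum_le_sum fun j hj => Finset.sum_le_sum fun i hi => ?_
          rw [Finset.mem_range] at hj hi
          exact hs hw (h + 2 * i) j (by omega) (by omega)
  · simp only [Finset.mem_image, Finset.mem_product, Finset.mem_range]
    rintro _ ⟨⟨j, x⟩, hjx, rfl⟩ σ ⟨a, ha, hσ⟩
    rw [Finset.mem_insert, Finset.mem_singleton] at ha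
    rcases ha with rfl | rfl
    exacts [⟨j, by omega, hσ⟩, ⟨h + x, by omega, hσ⟩]

lemma IsPath.eq_of_forall_satClause {F : Set (Clause n)} {w : ℕ → Fin n × Bool} {K : ℕ}
    (hw : IsPath (Implies F) K w) {σ : Fin n → Bool} (hσ : ∀ C ∈ F, SatClause σ C) {i j : ℕ}
    (hij : i ≤ j) (hj : j < K) (hi : σ (w i).1 = (w i).2) : σ (w j).1 = (w j).2 := by
  induction j, hij using Nat.le_induction with
  | base => exact hi
  | succ j _ ih => exact satClause_implClause_iff.1 (hσ _ (hw.rel j hj)) (ih (by omega))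

/-- Satisfying a hitting clause of the first half of the path makes a literal there true, and
satisfying one of the reversed second half makes a literal there false, although truth propagates
along the path. -/
lemma IsSpread.prob_satInstance_append_le (hs : IsSpread q κ) (hq : q ∈ stdSimplex ℝ (Clause n))
    {h k l : ℕ} {I : Fin k → Clause n} (hI : ∀ i, q (I i) ≠ 0)
    (hpath : HasPath (6 * h) (Set.range I)) :
    prob q l (fun J => SatInstance (Fin.append I J)) ≤
      2 * Real.exp (-(l * ((h : ℝ) ^ 2 * κ))) := by
  obtain ⟨w, hw⟩ := hpath
  have hsupport : IsPath (Implies (Function.support q)) (6 * h) w :=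
    hw.imp fun a b ⟨i, hi⟩ => Set.mem_of_eq_of_mem hi.symm (hI i)
  obtain ⟨Z, hZ, hZw⟩ := hs.exists_clauses (hsupport.mono (by omega : 3 * h ≤ 6 * h))
  obtain ⟨Z', hZ', hZw'⟩ := hs.exists_clauses
    ((hsupport.reverse (skewSymmetric_implies _)).mono (by omega : 3 * h ≤ 6 * h))
  have havoid : ∀ Z : Finset (Clause n), (h : ℝ) ^ 2 * κ ≤ ∑ C ∈ Z, q C →
      prob q l (fun J => ∀ i, J i ∉ Z) ≤ Real.exp (-(l * ((h : ℝ) ^ 2 * κ))) := fun Z hZ =>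
    (prob_forall_notMem_le_exp hq l Z).trans (by gcongr)
  have hunsat : ∀ J : Fin l → Clause n, SatInstance (Fin.append I J) →
      (∀ i, J i ∉ Z) ∨ ∀ i, J i ∉ Z' := by
    rintro J ⟨σ, hσ⟩
    by_contra! hJ
    obtain ⟨⟨i, hi⟩, i', hi'⟩ := hJ
    have hσI : ∀ C ∈ Set.range I, SatClause σ C := Set.forall_mem_range.2 fun j => by
      simpa using hσ (Fin.castAdd l j)
    have hσJ : ∀ j, SatClause σ (J j) := fun j => by simpa using hσ (Fin.natAdd k j)
    obtain ⟨x, hx, hxσ⟩ := hZw _ hi σ (hσJ i)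
    obtain ⟨y, hy, hyσ⟩ := hZw' _ hi' σ (hσJ i')
    have htrue := hw.eq_of_forall_satClause hσI (j := 6 * h - 1 - y) (by omega) (by omega) hxσ
    exact (Bool.eq_not_self _).1 (htrue.symm.trans hyσ)
  calc prob q l (fun J => SatInstance (Fin.append I J))
      ≤ prob q l (fun J => (∀ i, J i ∉ Z) ∨ ∀ i, J i ∉ Z') :=
        prob_mono hq.1 fun J _ => hunsat J
    _ ≤ 2 * Real.exp (-(l * ((h : ℝ) ^ 2 * κ))) :=
        (prob_or_le hq.1 _ _).trans (by linarith [havoid Z hZ, havoid Z' hZ'])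

lemma IsSpread.prob_satInstance_le (hs : IsSpread q κ) (hq : q ∈ stdSimplex ℝ (Clause n))
    (h k l : ℕ) :
    prob q (k + l) SatInstance ≤ prob q k (fun I => ¬ HasPath (6 * h) (Set.range I)) +
      2 * Real.exp (-(l * ((h : ℝ) ^ 2 * κ))) :=
  prob_append_le hq _ _ (by positivity) fun _ hI hpath =>
    hs.prob_satInstance_append_le hq hI (not_not.1 hpath)

end Spread

section Regular

variable {n : ℕ} {Ω : Finset (Clause n)} {d : ℕ} {c : ℝ}

/-- The uniform probability weights on a finite set. -/
noncomputable def uniformWeight {α : Type*} [DecidableEq α] (Ω : Finset α) (x : α) : ℝ :=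
  if x ∈ Ω then (Ω.card : ℝ)⁻¹ else 0

lemma uniformWeight_mem_stdSimplex {α : Type*} [Fintype α] [DecidableEq α] {Ω : Finset α}
    (hΩ : Ω.Nonempty) :
    uniformWeight Ω ∈ stdSimplex ℝ α := by
  refine ⟨fun x => ite_nonneg (by positivity) le_rfl, ?_⟩
  have hcard : (Ω.card : ℝ) ≠ 0 := Nat.cast_ne_zero.2 hΩ.card_pos.ne'
  simp only [uniformWeight, Finset.sum_ite_mem, Finset.univ_inter, Finset.sum_const, nsmul_eq_mul,
    mul_inv_cancel₀ hcard]

/-- A set of two-literal clauses in which every literal occurs exactly `d` times. -/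
structure IsRegular (Ω : Finset (Clause n)) (d : ℕ) : Prop where
  isTwoClause : ∀ C ∈ Ω, IsTwoClause C
  card_filter : ∀ a : Fin n × Bool, (Finset.univ.filter fun b => {a, b} ∈ Ω).card = d

namespace IsRegular

lemma card_filter_mem (hΩ : IsRegular Ω d) (a : Fin n × Bool) :
    (Ω.filter fun C => a ∈ C).card = d := by
  rw [← hΩ.card_filter a]
  refine (Finset.card_nbij (fun b => {a, b}) (fun b hb => ?_) (fun b _ b' hb' h => ?_)
    fun C hC => ?_).symm
  · simpa using hb
  · have hne : a ≠ b' := by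
      rintro rfl
      obtain ⟨x, y, hxy, h⟩ := hΩ.isTwoClause _ (by simpa using hb')
      have hcard := congrArg Finset.card h
      rw [Finset.card_pair (ne_of_apply_ne Prod.fst hxy)] at hcard
      simp at hcard
    have hmem : b' ∈ ({a, b} : Clause n) := by
      simp only [h, Finset.mem_insert, Finset.mem_singleton, or_true]
    simpa [hne.symm, eq_comm] using hmem
  · obtain ⟨hC, ha⟩ := Finset.mem_filter.1 hC
    obtain ⟨x, y, -, rfl⟩ := hΩ.isTwoClause C hC
    rcases Finset.mem_insert.1 ha with rfl | ha
    · exact ⟨y, by simpa using hC, rfl⟩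
    · obtain rfl := Finset.mem_singleton.1 ha
      exact ⟨x, by simpa [Finset.pair_comm] using hC, Finset.pair_comm _ _⟩

lemma card_eq (hΩ : IsRegular Ω d) : Ω.card = n * d := by
  have hdouble : ∑ C ∈ Ω, C.card = Ω.card * 2 := Finset.sum_const_nat fun C hC => by
    obtain ⟨a, b, hab, rfl⟩ := hΩ.isTwoClause C hC
    exact Finset.card_pair (ne_of_apply_ne Prod.fst hab)
  rw [Finset.sum_card hΩ.card_filter_mem, Fintype.card_prod, Fintype.card_fin,
    Fintype.card_bool] at hdouble
  linarith

lemma le_two_mul (hΩ : IsRegular Ω d) (a : Fin n × Bool) : d ≤ 2 * n := by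
  rw [← hΩ.card_filter a]
  exact (Finset.card_le_univ _).trans_eq (by simp [mul_comm])

lemma le_uniformWeight (hΩ : IsRegular Ω d) {C : Clause n} (hC : C ∈ Ω) :
    1 / (2 * (n : ℝ) ^ 2) ≤ uniformWeight Ω C := by
  obtain ⟨a, -⟩ := hΩ.isTwoClause C hC
  have hcard : Ω.card ≤ 2 * n ^ 2 := by
    rw [hΩ.card_eq]
    nlinarith [hΩ.le_two_mul a]
  have hpos : 0 < (Ω.card : ℝ) := Nat.cast_pos.2 (Finset.card_pos.2 ⟨C, hC⟩)
  rw [uniformWeight, if_pos hC, ← one_div]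
  exact one_div_le_one_div_of_le hpos (by exact_mod_cast hcard)

lemma isBalanced (hΩ : IsRegular Ω d) (hn : 0 < n) (hd : (n : ℝ) ≤ c * d) :
    IsBalanced (uniformWeight Ω) c := by
  have hn' : (0 : ℝ) < n := Nat.cast_pos.2 hn
  have hcd : 0 < c * d := hn'.trans_le hd
  have hd' : 0 < d := Nat.cast_pos.1 <|
    d.cast_nonneg.lt_of_ne' (right_ne_zero_of_mul hcd.ne')
  have hc : 0 < c := pos_of_mul_pos_left hcd d.cast_nonneg
  refine ⟨uniformWeight_mem_stdSimplex ?_, fun C hC => ?_, fun a => ?_, fun C => ?_⟩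
  · rw [← Finset.card_pos, hΩ.card_eq]
    exact Nat.mul_pos hn hd'
  · exact hΩ.isTwoClause C (by_contra fun h => hC (if_neg h))
  · have hcount : (Finset.univ.filter fun b => implClause a b ∈ Ω).card = d :=
      hΩ.card_filter (negLit a)
    simp only [uniformWeight]
    rw [← Finset.sum_filter, Finset.sum_const, hcount, nsmul_eq_mul, hΩ.card_eq]
    push_cast
    field_simp
  · rw [uniformWeight]
    split_ifs
    · rw [hΩ.card_eq, inv_eq_one_div, div_le_div_iff₀ (by positivity) (by positivity)]
      push_cast
      nlinarith
    · positivity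

end IsRegular

lemma convex_setOf_isBalanced (n : ℕ) (c : ℝ) :
    Convex ℝ {q : Clause n → ℝ | IsBalanced q c} := by
  intro q hq q' hq' a b ha hb hab
  refine ⟨convex_stdSimplex ℝ _ hq.mem_stdSimplex hq'.mem_stdSimplex ha hb hab, fun C hC => ?_,
    fun x => ?_, fun C => ?_⟩
  · by_cases h : q C = 0
    · refine hq'.isTwoClause C fun h' => hC ?_
      simp [h, h']
    · exact hq.isTwoClause C h
  · simp only [Pi.add_apply, Pi.smul_apply, smul_eq_mul, Finset.sum_add_distrib,
      ← Finset.mul_sum, hq.sum_implClause, hq'.sum_implClause]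
    rw [← add_mul, hab, one_mul]
  · exact convex_Iic (c / (n : ℝ) ^ 2) (hq.le_div_sq C) (hq'.le_div_sq C) ha hb hab

end Regular

section Communities

lemma card_comm_eq {B t : ℕ} (u : Fin (B * t)) :
    (Finset.univ.filter fun v : Fin (B * t) => comm t v = comm t u).card = t := by
  have ht : 0 < t := Nat.pos_of_mul_pos_left u.pos
  have hu : comm t u < B := Nat.div_lt_of_lt_mul (by simp [mul_comm])
  have hmap : (Finset.univ.filter fun v : Fin (B * t) => comm t v = comm t u).map
      Fin.valEmbedding = Finset.Ico (comm t u * t) ((comm t u + 1) * t) := by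
    ext x
    simp only [Finset.mem_map, Finset.mem_filter, Finset.mem_univ, true_and,
      Fin.valEmbedding_apply, Finset.mem_Ico]
    constructor
    · rintro ⟨v, hv, rfl⟩
      rw [← hv]
      exact ⟨Nat.div_mul_le_self _ _, Nat.lt_mul_of_div_lt (Nat.lt_succ_self _) ht⟩
    · rintro ⟨hx, hx'⟩
      exact ⟨⟨x, hx'.trans_le (Nat.mul_le_mul_right t hu)⟩, Nat.div_eq_of_lt_le hx hx', rfl⟩
  rw [← Finset.card_map Fin.valEmbedding, hmap, Nat.card_Ico, add_mul, one_mul,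
    Nat.add_sub_cancel_left]

variable {n h : ℕ}

lemma vars_pair (a b : Fin n × Bool) : vars ({a, b} : Clause n) = {a.1, b.1} := by
  simp [vars, Finset.image_insert]

lemma clauseType_eq_map_image (C : Clause n) :
    clauseType h C = ((vars C).image (comm h)).val.map
      fun i => ((vars C).filter fun v => comm h v = i).card := by
  have hfilter : (Finset.range n).filter
      (fun i => ((vars C).filter fun v => comm h v = i).card ≠ 0) = (vars C).image (comm h) := by
    ext i
    simp only [Finset.mem_filter, Finset.mem_range, Finset.mem_image, Finset.card_ne_zero,
      Finset.Nonempty, and_iff_right_iff_imp]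
    rintro ⟨v, -, rfl⟩
    exact (Nat.div_le_self _ _).trans_lt v.2
  rw [clauseType, Multiset.filter_map, ← hfilter]
  rfl

lemma sum_clauseType (C : Clause n) : (clauseType h C).sum = (vars C).card := by
  rw [clauseType_eq_map_image]
  exact (Finset.card_eq_sum_card_image (comm h) (vars C)).symm

lemma clauseType_pair_of_comm_eq {a b : Fin n × Bool} (hab : comm h a.1 = comm h b.1) :
    clauseType h ({a, b} : Clause n) = {({a.1, b.1} : Finset (Fin n)).card} := by
  rw [clauseType_eq_map_image, vars_pair]
  simp [Finset.image_insert, hab, Finset.filter_insert, Finset.filter_singleton]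

lemma clauseType_pair_of_comm_ne {a b : Fin n × Bool} (hab : comm h a.1 ≠ comm h b.1) :
    clauseType h ({a, b} : Clause n) = {1, 1} := by
  rw [clauseType_eq_map_image, vars_pair, Finset.image_insert, Finset.image_singleton,
    Finset.insert_val_of_notMem (by simpa using hab)]
  simp [Finset.filter_insert, Finset.filter_singleton, hab, hab.symm]

lemma mem_clausesOfType {K : Multiset ℕ} {C : Clause n} :
    C ∈ clausesOfType n h K ↔ Proper C ∧ clauseType h C = K := by
  simp [clausesOfType]

lemma proper_pair {a b : Fin n × Bool} (hab : a.1 ≠ b.1) : Proper ({a, b} : Clause n) := by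
  rw [Proper, vars_pair, Finset.card_pair hab, Finset.card_pair (ne_of_apply_ne Prod.fst hab)]

lemma pair_mem_clausesOfType_two_iff {a b : Fin n × Bool} :
    ({a, b} : Clause n) ∈ clausesOfType n h {2} ↔ a.1 ≠ b.1 ∧ comm h a.1 = comm h b.1 := by
  rw [mem_clausesOfType]
  by_cases hab : comm h a.1 = comm h b.1
  · rw [clauseType_pair_of_comm_eq hab, Multiset.singleton_inj, Finset.card_pair_eq_two_iff]
    simp only [hab, and_true, and_iff_right_iff_imp]
    exact proper_pair
  · rw [clauseType_pair_of_comm_ne hab]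
    simp only [hab, and_false, iff_false, not_and]
    exact fun _ h => by simpa using congrArg Multiset.card h

lemma pair_mem_clausesOfType_one_one_iff {a b : Fin n × Bool} :
    ({a, b} : Clause n) ∈ clausesOfType n h {1, 1} ↔ comm h a.1 ≠ comm h b.1 := by
  rw [mem_clausesOfType]
  by_cases hab : comm h a.1 = comm h b.1
  · rw [clauseType_pair_of_comm_eq hab]
    simp only [hab, ne_eq, not_true_eq_false, iff_false, not_and]
    exact fun _ h => by simpa using congrArg Multiset.card h
  · simp [clauseType_pair_of_comm_ne hab, hab, proper_pair (ne_of_apply_ne (comm h) hab)]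

lemma isTwoClause_of_mem_clausesOfType {K : Multiset ℕ} (hK : K.sum = 2) {C : Clause n}
    (hC : C ∈ clausesOfType n h K) : IsTwoClause C := by
  obtain ⟨hproper, rfl⟩ := mem_clausesOfType.1 hC
  rw [sum_clauseType] at hK
  obtain ⟨a, b, -, rfl⟩ := Finset.card_eq_two.1 (hproper.trans hK)
  rw [vars_pair, Finset.card_pair_eq_two_iff] at hK
  exact ⟨a, b, hK, rfl⟩

lemma isRegular_of_pair_mem_iff {Ω : Finset (Clause n)} {S : Fin n → Finset (Fin n)} {d : ℕ}
    (hΩ : ∀ C ∈ Ω, IsTwoClause C) (hmem : ∀ a b, {a, b} ∈ Ω ↔ b.1 ∈ S a.1)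
    (hcard : ∀ u, (S u).card = d) : IsRegular Ω (2 * d) where
  isTwoClause := hΩ
  card_filter a := by
    simp only [hmem, card_filter_fst_mem, hcard]

lemma isRegular_clausesOfType_two (B t : ℕ) :
    IsRegular (clausesOfType (B * t) t {2}) (2 * (t - 1)) :=
  isRegular_of_pair_mem_iff
    (S := fun u => (Finset.univ.filter fun v => comm t v = comm t u).erase u)
    (fun _ => isTwoClause_of_mem_clausesOfType rfl)
    (fun a b => by simp [pair_mem_clausesOfType_two_iff, eq_comm])
    fun u => by rw [Finset.card_erase_of_mem (by simp), card_comm_eq]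

lemma isRegular_clausesOfType_one_one (B t : ℕ) :
    IsRegular (clausesOfType (B * t) t {1, 1}) (2 * (B * t - t)) :=
  isRegular_of_pair_mem_iff (S := fun u => (Finset.univ.filter fun v => comm t v = comm t u)ᶜ)
    (fun _ => isTwoClause_of_mem_clausesOfType rfl)
    (fun a b => by rw [pair_mem_clausesOfType_one_one_iff]; simp [eq_comm])
    fun u => by rw [Finset.card_compl, card_comm_eq, Fintype.card_fin]

end Communities

section Mixture

variable {n h T : ℕ} {p : Fin T → ℝ} {K : Fin T → Multiset ℕ}

lemma clauseProb_eq_sum_smul_uniformWeight :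
    clauseProb n h p K = ∑ t, p t • uniformWeight (clausesOfType n h (K t)) := by
  ext C
  simp only [Finset.sum_apply, Pi.smul_apply, smul_eq_mul]
  rfl

lemma mul_uniformWeight_le_clauseProb (hp : ∀ t, 0 ≤ p t) (t : Fin T) (C : Clause n) :
    p t * uniformWeight (clausesOfType n h (K t)) C ≤ clauseProb n h p K C :=
  Finset.single_le_sum (f := fun t => p t * uniformWeight (clausesOfType n h (K t)) C)
    (fun t _ => mul_nonneg (hp t) (ite_nonneg (by positivity) le_rfl)) (Finset.mem_univ t)

lemma clauseProb_nonneg (hp : ∀ t, 0 ≤ p t) (C : Clause n) : 0 ≤ clauseProb n h p K C :=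
  Finset.sum_nonneg fun t _ => mul_nonneg (hp t) (ite_nonneg (by positivity) le_rfl)

lemma exists_mem_of_clauseProb_ne_zero {C : Clause n} (hC : clauseProb n h p K C ≠ 0) :
    ∃ t, p t ≠ 0 ∧ C ∈ clausesOfType n h (K t) := by
  obtain ⟨t, -, ht⟩ := Finset.exists_ne_zero_of_sum_ne_zero hC
  exact ⟨t, left_ne_zero_of_mul ht, by_contra fun h => right_ne_zero_of_mul ht (if_neg h)⟩

lemma exists_le_clauseProb (hp : ∀ t, 0 ≤ p t) :
    ∃ κ > 0, ∀ (n h : ℕ), (∀ t, ∃ d, IsRegular (clausesOfType n h (K t)) d) →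
      ∀ t, p t ≠ 0 → ∀ C ∈ clausesOfType n h (K t), κ / (n : ℝ) ^ 2 ≤ clauseProb n h p K C := by
  have hsmall : ∀ t, ∀ᶠ κ in nhdsWithin 0 (Set.Ioi 0), p t ≠ 0 → κ ≤ p t / 2 := fun t => by
    rcases (hp t).eq_or_lt with hpt | hpt
    · simp [← hpt]
    · filter_upwards [Ioc_mem_nhdsGT (half_pos hpt)] with κ hκ _ using hκ.2
  obtain ⟨κ, hκ, hκ0⟩ := ((eventually_all.2 hsmall).and self_mem_nhdsWithin).exists
  refine ⟨κ, hκ0, fun n h hreg t ht C hC => ?_⟩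
  obtain ⟨d, hd⟩ := hreg t
  calc κ / (n : ℝ) ^ 2 ≤ p t / 2 / (n : ℝ) ^ 2 := by
        gcongr
        exact hκ t ht
    _ = p t * (1 / (2 * (n : ℝ) ^ 2)) := by ring
    _ ≤ p t * uniformWeight (clausesOfType n h (K t)) C := by
        gcongr
        · exact hp t
        · exact hd.le_uniformWeight hC
    _ ≤ clauseProb n h p K C := mul_uniformWeight_le_clauseProb hp t C

end Mixture

section MixedTwoSat

variable {B t : ℕ} {p : ℝ}

lemma isBalanced_clauseProb (hp0 : 0 ≤ p) (hp1 : p ≤ 1) (hB : 2 ≤ B) (ht : 2 ≤ t) :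
    IsBalanced (clauseProb (B * t) t ![p, 1 - p] ![({1, 1} : Multiset ℕ), {2}]) B := by
  have hn : 0 < B * t := by positivity
  have hBt : 2 * t ≤ B * t := Nat.mul_le_mul_right t hB
  rw [clauseProb_eq_sum_smul_uniformWeight]
  refine (convex_setOf_isBalanced (B * t) B).sum_mem ?_ ?_ ?_
  · simp [Fin.forall_fin_two, hp0, hp1]
  · simp
  · simp only [Finset.mem_univ, forall_const, Fin.forall_fin_two]
    refine ⟨(isRegular_clausesOfType_one_one B t).isBalanced hn ?_,
      (isRegular_clausesOfType_two B t).isBalanced hn ?_⟩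
    all_goals exact_mod_cast Nat.mul_le_mul_left B (by omega)

/-- Think of `col k` as the community of the `k`-th literal of a path, and of `D` and `S` as
allowing clauses between distinct communities and within one. With only `D`, consecutive communities
differ, so one of them differs from `col j`; with only `S`, the whole path stays in one
community. -/
lemma exists_joinable_of_forall_step {α : Type*} {col : ℕ → α} {D S : Prop} {K : ℕ}
    (hstep : ∀ k, k + 1 < K → (D ∧ col k ≠ col (k + 1)) ∨ (S ∧ col k = col (k + 1)))
    {i j : ℕ} (hji : j ≤ i) (hi : i + 1 < K) :
    ((D ∧ col j ≠ col i) ∨ (S ∧ col j = col i)) ∨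
      ((D ∧ col j ≠ col (i + 1)) ∨ (S ∧ col j = col (i + 1))) := by
  by_cases hD : D
  · by_cases hcol : col j = col i
    · rcases hstep i hi with ⟨-, hne⟩ | ⟨hS, -⟩
      · exact .inr (.inl ⟨hD, hcol ▸ hne⟩)
      · exact .inl (.inr ⟨hS, hcol⟩)
    · exact .inl (.inl ⟨hD, hcol⟩)
  · have hS : ∀ k, k + 1 < K → S ∧ col k = col (k + 1) := fun k hk =>
      (hstep k hk).resolve_left fun h => hD h.1
    have hconst : ∀ k, j ≤ k → k < K → col j = col k := fun k hjk => by
      induction k, hjk using Nat.le_induction with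
      | base => exact fun _ => rfl
      | succ k _ ih => exact fun hk => (ih (by omega)).trans (hS k hk).2
    exact .inl (.inr ⟨(hS i hi).1, hconst i hji (by omega)⟩)

lemma exists_isSpread_clauseProb (hp0 : 0 ≤ p) (hp1 : p ≤ 1) :
    ∃ κ > 0, ∀ B t : ℕ,
      IsSpread (clauseProb (B * t) t ![p, 1 - p] ![({1, 1} : Multiset ℕ), {2}])
        (κ / ((B * t : ℕ) : ℝ) ^ 2) := by
  have hp : ∀ s, 0 ≤ ![p, 1 - p] s := by simp [Fin.forall_fin_two, hp0, hp1]
  obtain ⟨κ, hκ, hle⟩ := exists_le_clauseProb (K := ![({1, 1} : Multiset ℕ), {2}]) hp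
  refine ⟨κ, hκ, fun B t w K hw i j hji hi => ?_⟩
  set q := clauseProb (B * t) t ![p, 1 - p] ![({1, 1} : Multiset ℕ), {2}]
  have hq : ∀ C, 0 ≤ q C := clauseProb_nonneg hp
  have hle' := hle (B * t) t <| by
    simp only [Fin.forall_fin_two]
    exact ⟨⟨_, isRegular_clausesOfType_one_one B t⟩, ⟨_, isRegular_clausesOfType_two B t⟩⟩
  have hjoin : ∀ a b : Fin (B * t) × Bool, a.1 ≠ b.1 →
      (p ≠ 0 ∧ comm t a.1 ≠ comm t b.1) ∨ (1 - p ≠ 0 ∧ comm t a.1 = comm t b.1) →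
        κ / ((B * t : ℕ) : ℝ) ^ 2 ≤ q {a, b} := by
    rintro a b hab (⟨hpos, hcomm⟩ | ⟨hpos, hcomm⟩)
    · exact hle' 0 hpos _ (pair_mem_clausesOfType_one_one_iff.2 hcomm)
    · exact hle' 1 hpos _ (pair_mem_clausesOfType_two_iff.2 ⟨hab, hcomm⟩)
  have hstep : ∀ k, k + 1 < K → (p ≠ 0 ∧ comm t (w k).1 ≠ comm t (w (k + 1)).1) ∨
      (1 - p ≠ 0 ∧ comm t (w k).1 = comm t (w (k + 1)).1) := fun k hk => by
    obtain ⟨s, hs, hmem⟩ := exists_mem_of_clauseProb_ne_zero (hw.rel k hk)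
    fin_cases s
    · exact .inl ⟨hs, (pair_mem_clausesOfType_one_one_iff (a := negLit (w k))).1 hmem⟩
    · exact .inr ⟨hs, ((pair_mem_clausesOfType_two_iff (a := negLit (w k))).1 hmem).2⟩
  have hne : ∀ k < K, j < k → (w j).1 ≠ (w k).1 := fun k hk hjk h =>
    hjk.ne (hw.injOn (hjk.trans hk) hk h)
  rcases exists_joinable_of_forall_step hstep hji.le hi with h | h
  · linarith [hjoin _ _ (hne i (by omega) hji) h, hq {w j, w (i + 1)}]
  · linarith [hjoin _ _ (hne (i + 1) hi (by omega)) h, hq {w j, w i}]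

end MixedTwoSat

section Asymptotics

lemma exp_neg_mul_add_le_one {θ b k x y : ℝ} (hθ : 0 < θ) (hx : 0 ≤ x) (hxb : x ≤ b)
    (hk : 0 ≤ k) (hy : 0 < y) (h : k * (1 + θ * b) ≤ y * θ) :
    Real.exp (-(θ * x)) + k * x / y ≤ 1 := by
  have hθx : 0 ≤ θ * x := by positivity
  have hexp : Real.exp (-(θ * x)) ≤ 1 / (1 + θ * x) := by
    rw [Real.exp_neg, ← one_div]
    exact one_div_le_one_div_of_le (by linarith) (by linarith [Real.add_one_le_exp (θ * x)])
  have hfrac : k * x / y ≤ θ * x / (1 + θ * x) := by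
    rw [div_le_div_iff₀ hy (by linarith)]
    calc k * x * (1 + θ * x) = k * (1 + θ * x) * x := by ring
      _ ≤ k * (1 + θ * b) * x := by gcongr
      _ ≤ y * θ * x := by gcongr
      _ = θ * x * y := by ring
  calc Real.exp (-(θ * x)) + k * x / y
      ≤ 1 / (1 + θ * x) + θ * x / (1 + θ * x) := add_le_add hexp hfrac
    _ = 1 := by field_simp

lemma mul_one_add_le_of_density {n c ε k v : ℝ} (hn : 0 < n) (hc : 0 ≤ c) (hε : 0 < ε)
    (hε1 : ε ≤ 1) (hcn : 144 * c ≤ ε ^ 2 * n) (hv0 : 0 ≤ v) (hv : 64 * v ≤ ε ^ 2 * n)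
    (hk : (1 + ε) * n ≤ k) (hk3 : k ≤ 3 * n) :
    k * (1 + (k - v - ε / 2 * n) * (c / n ^ 2)) ≤
      (1 + ε / 2 - ε ^ 2 / 16) * (k - v - ε / 2 * n) := by
  have hε2 : ε ^ 2 ≤ ε := by nlinarith
  have hk0 : 0 ≤ k := le_trans (by positivity) hk
  have hcollision : k * ((k - v - ε / 2 * n) * (c / n ^ 2)) ≤ 9 * c :=
    calc k * ((k - v - ε / 2 * n) * (c / n ^ 2)) ≤ k * (3 * n * (c / n ^ 2)) := by
          gcongr
          linarith [mul_pos hε hn]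
      _ ≤ 3 * n * (3 * n * (c / n ^ 2)) := by gcongr
      _ = 9 * c := by
          field_simp
          ring
  have hvisited : (1 + ε / 2 - ε ^ 2 / 16) * v ≤ ε ^ 2 / 32 * n :=
    calc (1 + ε / 2 - ε ^ 2 / 16) * v ≤ 2 * v := by
          gcongr
          nlinarith
      _ ≤ ε ^ 2 / 32 * n := by linarith
  have hclauses : (ε / 2 - ε ^ 2 / 16) * ((1 + ε) * n) ≤ (ε / 2 - ε ^ 2 / 16) * k := by
    gcongr
    linarith
  have hpoly : ε ^ 2 / 16 * n ≤ ((ε / 2 - ε ^ 2 / 16) * (1 + ε) -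
      (1 + ε / 2 - ε ^ 2 / 16) * (ε / 2) - ε ^ 2 / 32) * n := by
    gcongr
    nlinarith [pow_pos hε 3]
  linarith

lemma exponent_le_of_density {n c ε v K : ℝ} (hn : 0 < n) (hε : 0 < ε) (hε1 : ε ≤ 1)
    (hv0 : 0 ≤ v) (hv : 64 * c * v ≤ ε * n) (hK : 32 * K ≤ ε * v) :
    v * (ε / 2 - ε ^ 2 / 16) - ε / 2 * n * ((v - K) * (1 / n - 2 * v * (c / n ^ 2))) ≤
      -(ε ^ 2 / 32 * v) := by
  have hescape : (1 - ε / 32) / n ≤ 1 / n - 2 * v * (c / n ^ 2) := by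
    have hvisited : 2 * c * v / n ≤ ε / 32 := (div_le_iff₀ hn).2 (by linarith)
    rw [show 1 / n - 2 * v * (c / n ^ 2) = (1 - 2 * c * v / n) / n by field_simp]
    exact div_le_div_of_nonneg_right (by linarith) hn.le
  have hexhausted : (1 - ε / 32) * v ≤ v - K := by linarith
  have hprod : (1 - ε / 32) * v * ((1 - ε / 32) / n) ≤
      (v - K) * (1 / n - 2 * v * (c / n ^ 2)) :=
    mul_le_mul hexhausted hescape (div_nonneg (by linarith) hn.le)
      (le_trans (mul_nonneg (by linarith) hv0) hexhausted)
  calc v * (ε / 2 - ε ^ 2 / 16) - ε / 2 * n * ((v - K) * (1 / n - 2 * v * (c / n ^ 2)))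
      ≤ v * (ε / 2 - ε ^ 2 / 16) -
          ε / 2 * n * ((1 - ε / 32) * v * ((1 - ε / 32) / n)) := by gcongr
    _ = -(ε ^ 2 / 32 * v) - v * ε ^ 3 / 2048 := by
        field_simp
        ring
    _ ≤ -(ε ^ 2 / 32 * v) := sub_le_self _ (by positivity)

lemma pow_le_exp_mul_sub_one {y : ℝ} (hy : 0 ≤ y) (v : ℕ) :
    y ^ v ≤ Real.exp (v * (y - 1)) := by
  rw [Real.exp_nat_mul]
  exact pow_le_pow_left₀ hy (by linarith [Real.add_one_le_exp (y - 1)]) v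

variable {c κ ε : ℝ}

lemma IsBalanced.prob_not_hasPath_le_exp {n : ℕ} {q : Clause n → ℝ} (hq : IsBalanced q c)
    (hc : 1 ≤ c) (hε : 0 < ε) (hε1 : ε ≤ 1) (hcn : 144 * c ≤ ε ^ 2 * n) {K v k : ℕ} (hK : 0 < K)
    (hv : 64 * c * v ≤ ε ^ 2 * n) (hKv : 32 * (K : ℝ) ≤ ε * v)
    (hk : (1 + ε) * n ≤ k) (hk3 : (k : ℝ) ≤ 3 * n) :
    prob q k (fun I => ¬ HasPath K (Set.range I)) ≤ Real.exp (-(ε ^ 2 / 32 * v)) := by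
  have hn : (0 : ℝ) < n := pos_of_mul_pos_right (lt_of_lt_of_le (by positivity) hcn) (by positivity)
  have hε2 : ε ^ 2 ≤ ε := by nlinarith
  have hεn : ε ^ 2 * n ≤ ε * n := by gcongr
  have hεn1 : ε * n ≤ n := mul_le_of_le_one_left hn.le hε1
  have hv' : 64 * (v : ℝ) ≤ ε ^ 2 * n := le_trans (by nlinarith [v.cast_nonneg (α := ℝ)]) hv
  have hvn : (v : ℝ) ≤ n := by linarith [v.cast_nonneg (α := ℝ)]
  have hθ : 0 < (k : ℝ) - v - ε / 2 * n := by linarith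
  have hstep : ∀ C, Real.exp (-(((k : ℝ) - v - ε / 2 * n) * q C)) +
      k * q C / (1 + ε / 2 - ε ^ 2 / 16) ≤ 1 := fun C =>
    exp_neg_mul_add_le_one hθ (hq.nonneg C) (hq.le_div_sq C) k.cast_nonneg (by linarith)
      (mul_one_add_le_of_density hn (by linarith) hε hε1 hcn v.cast_nonneg hv' hk hk3)
  have hescape : 0 ≤ 1 / (n : ℝ) - 2 * v * (c / (n : ℝ) ^ 2) := by
    rw [show 1 / (n : ℝ) - 2 * v * (c / (n : ℝ) ^ 2) = (n - 2 * c * v) / (n : ℝ) ^ 2 by field_simp]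
    exact div_nonneg (by linarith [show 0 ≤ c * v by positivity]) (by positivity)
  calc prob q k (fun I => ¬ HasPath K (Set.range I))
      ≤ (1 + ε / 2 - ε ^ 2 / 16) ^ v * Real.exp (-(ε / 2 * n *
          (((v : ℝ) - K) * (1 / (n : ℝ) - 2 * v * (c / (n : ℝ) ^ 2))))) :=
        hq.prob_not_hasPath_le hK (by exact_mod_cast hvn) hθ.le (by positivity) (by linarith)
          (by linarith) hstep hescape
    _ ≤ Real.exp (v * (1 + ε / 2 - ε ^ 2 / 16 - 1)) * Real.exp (-(ε / 2 * n *
          (((v : ℝ) - K) * (1 / (n : ℝ) - 2 * v * (c / (n : ℝ) ^ 2))))) := by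
        gcongr
        exact pow_le_exp_mul_sub_one (by linarith) v
    _ ≤ Real.exp (-(ε ^ 2 / 32 * v)) := by
        rw [← Real.exp_add, Real.exp_le_exp]
        linarith [exponent_le_of_density hn hε hε1 v.cast_nonneg (hv.trans hεn) hKv]

lemma eventually_half_mul_le_floor {δ : ℝ} (hδ : 0 < δ) :
    ∀ᶠ n : ℕ in atTop, δ / 2 * n ≤ ⌊δ * n⌋₊ := by
  filter_upwards [(tendsto_natCast_atTop_atTop.const_mul_atTop hδ).eventually_ge_atTop 2]
    with n hn
  linarith [Nat.lt_floor_add_one (δ * n)]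

lemma exists_eventually_prob_not_hasPath_le (c : ℝ) (hε : 0 < ε) (hε1 : ε ≤ 1) :
    ∃ α > 0, ∃ a > 0, ∀ᶠ n : ℕ in atTop, ∀ (q : Clause n → ℝ) (k K : ℕ), IsBalanced q c →
      (1 + ε) * n ≤ k → (k : ℝ) ≤ 3 * n → 0 < K → (K : ℝ) ≤ α * n →
        prob q k (fun I => ¬ HasPath K (Set.range I)) ≤ Real.exp (-(a * n)) := by
  set c' := max c 1
  have hc' : 1 ≤ c' := le_max_right c 1
  set δ := ε ^ 2 / (64 * c') with hδ
  have hδ0 : 0 < δ := by positivity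
  refine ⟨ε / 32 * (δ / 2), by positivity, ε ^ 2 / 32 * (δ / 2), by positivity, ?_⟩
  filter_upwards [eventually_half_mul_le_floor hδ0,
    (tendsto_natCast_atTop_atTop.const_mul_atTop (pow_pos hε 2)).eventually_ge_atTop (144 * c')]
    with n hfloor hn q k K hq hk hk3 hK hKn
  have hv : 64 * c' * (⌊δ * n⌋₊ : ℝ) ≤ ε ^ 2 * n :=
    calc 64 * c' * (⌊δ * n⌋₊ : ℝ) ≤ 64 * c' * (δ * n) := by
          gcongr
          exact Nat.floor_le (by positivity)
      _ = ε ^ 2 * n := by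
          rw [hδ]
          field_simp
  have hKv : 32 * (K : ℝ) ≤ ε * ⌊δ * n⌋₊ :=
    calc 32 * (K : ℝ) ≤ ε * (δ / 2 * n) := by linarith
      _ ≤ ε * ⌊δ * n⌋₊ := by gcongr
  refine ((hq.mono (le_max_left c 1)).prob_not_hasPath_le_exp hc' hε hε1 hn hK hv hKv hk
    hk3).trans ?_
  rw [Real.exp_le_exp, neg_le_neg_iff, mul_assoc]
  gcongr

/-- The first `(1 + ε) * n` clauses contain a path of linear length, and the remaining `ε * n / 2`
clauses contradict it. -/
lemma exists_eventually_prob_satInstance_le (c : ℝ) (hκ : 0 < κ) (hε : 0 < ε) (hε1 : ε ≤ 1) :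
    ∃ a > 0, ∃ b > 0, ∀ᶠ n : ℕ in atTop, ∀ (q : Clause n → ℝ) (m : ℕ), IsBalanced q c →
      IsSpread q (κ / (n : ℝ) ^ 2) → (1 + 2 * ε) * n ≤ m →
        prob q m SatInstance ≤ Real.exp (-(a * n)) + 2 * Real.exp (-(b * n)) := by
  obtain ⟨α, hα, a, ha, hpath⟩ := exists_eventually_prob_not_hasPath_le c hε hε1
  refine ⟨a, ha, ε / 2 * ((α / 6 / 2) ^ 2 * κ), by positivity, ?_⟩
  filter_upwards [hpath, eventually_half_mul_le_floor (δ := α / 6) (by positivity),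
    eventually_gt_atTop 0,
    (tendsto_natCast_atTop_atTop.const_mul_atTop hε).eventually_ge_atTop 2]
    with n hpath hfloor hn hεn q m hq hs hm
  have hn' : (0 : ℝ) < n := Nat.cast_pos.2 hn
  set h := ⌊α / 6 * n⌋₊
  have hh : 0 < h := Nat.cast_pos.1 (lt_of_lt_of_le (by positivity) hfloor)
  have hk := Nat.le_ceil ((1 + ε) * (n : ℝ))
  have hk' := (Nat.ceil_lt_add_one (show 0 ≤ (1 + ε) * (n : ℝ) by positivity)).le
  set k := ⌈(1 + ε) * (n : ℝ)⌉₊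
  have hεn1 : ε * n ≤ n := mul_le_of_le_one_left hn'.le hε1
  obtain ⟨l, rfl⟩ := Nat.exists_eq_add_of_le
    (show k ≤ m by exact_mod_cast (by linarith : (k : ℝ) ≤ m))
  push_cast at hm
  have hl : ε / 2 * n ≤ l := by linarith
  have hhn : ((6 * h : ℕ) : ℝ) ≤ α * n := by
    push_cast
    linarith [Nat.floor_le (show 0 ≤ α / 6 * n by positivity)]
  refine (hs.prob_satInstance_le hq.mem_stdSimplex h k l).trans (add_le_add
    (hpath q k (6 * h) hq hk (by linarith) (by omega) hhn) ?_)
  refine mul_le_mul_of_nonneg_left (Real.exp_le_exp.2 (neg_le_neg ?_)) zero_le_two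
  calc ε / 2 * ((α / 6 / 2) ^ 2 * κ) * n
      = ε / 2 * n * ((α / 6 / 2 * n) ^ 2 * (κ / (n : ℝ) ^ 2)) := by field_simp
    _ ≤ l * ((h : ℝ) ^ 2 * (κ / (n : ℝ) ^ 2)) := by gcongr

theorem tendsto_prob_satInstance_zero {ι : Type*} {f : Filter ι} {n m : ι → ℕ}
    {q : ∀ i, Clause (n i) → ℝ} {r : ℝ} (hq : ∀ᶠ i in f, IsBalanced (q i) c)
    (hs : ∀ᶠ i in f, IsSpread (q i) (κ / (n i : ℝ) ^ 2)) (hκ : 0 < κ) (hn : Tendsto n f atTop)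
    (hm : Tendsto (fun i => (m i : ℝ) / n i) f (nhds r)) (hr : 1 < r) :
    Tendsto (fun i => prob (q i) (m i) SatInstance) f (nhds 0) := by
  set ε := min 1 ((r - 1) / 3)
  have hε : 0 < ε := lt_min one_pos (by linarith)
  have hεr : 1 + 2 * ε < r := by linarith [min_le_right 1 ((r - 1) / 3)]
  obtain ⟨a, ha, b, hb, hbound⟩ :=
    exists_eventually_prob_satInstance_le c hκ hε (min_le_left 1 ((r - 1) / 3))
  have hlim : ∀ {a : ℝ}, 0 < a → Tendsto (fun i => Real.exp (-(a * n i))) f (nhds 0) := fun ha =>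
    Real.tendsto_exp_neg_atTop_nhds_zero.comp
      ((tendsto_natCast_atTop_atTop.comp hn).const_mul_atTop ha)
  refine squeeze_zero' (hq.mono fun i hqi => prob_nonneg hqi.nonneg _) ?_
    (by simpa using (hlim ha).add ((hlim hb).const_mul 2))
  filter_upwards [hq, hs, hm.eventually_const_le hεr, hn.eventually hbound,
    hn.eventually_gt_atTop 0] with i hqi hsi hmi hboundi hni
  exact hboundi _ _ hqi hsi ((le_div_iff₀ (Nat.cast_pos.2 hni)).1 hmi)

end Asymptotics

/-- **Theorem 5.** For fixed `0 ≤ p ≤ 1` and a fixed number `B ≥ 2` of communities, the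
satisfiability threshold of the model `F(n, m, B, p·P_(1,1) + (1-p)·P_(2))` (with `n`
ranging over multiples of `B`, so the community size is `t = n/B`) is `1`: if
`m(n)/n → r < 1` the instance is SAT w.h.p., and if `r > 1` it is UNSAT w.h.p. -/
theorem threshold_one_for_mixed_two_sat (p : ℝ) (hp0 : 0 ≤ p) (hp1 : p ≤ 1)
    (B : ℕ) (hB : 2 ≤ B) (m : ℕ → ℕ) (r : ℝ)
    (hr : Tendsto (fun t : ℕ => (m (B * t) : ℝ) / ((B * t : ℕ) : ℝ)) atTop (nhds r)) :
    (r < 1 → Tendsto (fun t : ℕ =>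
        satProb (B * t) (m (B * t)) t ![p, 1 - p] ![({1, 1} : Multiset ℕ), {2}])
      atTop (nhds 1)) ∧
    (1 < r → Tendsto (fun t : ℕ =>
        satProb (B * t) (m (B * t)) t ![p, 1 - p] ![({1, 1} : Multiset ℕ), {2}])
      atTop (nhds 0)) := by
  have hn : Tendsto (fun t : ℕ => B * t) atTop atTop := tendsto_id.const_mul_atTop' (by omega)
  have hbalanced : ∀ᶠ t in atTop, IsBalanced
      (clauseProb (B * t) t ![p, 1 - p] ![({1, 1} : Multiset ℕ), {2}]) B :=
    (eventually_ge_atTop 2).mono fun t ht => isBalanced_clauseProb hp0 hp1 hB ht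
  obtain ⟨κ, hκ, hspread⟩ := exists_isSpread_clauseProb hp0 hp1
  simp only [satProb_eq_prob]
  exact ⟨tendsto_prob_satInstance_one hbalanced hn hr,
    tendsto_prob_satInstance_zero hbalanced (.of_forall (hspread B)) hκ hn hr⟩

end RandIndSAT
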